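/- arXiv:1104.0219 — 2 statements merged into one kernel-verified Lean document; each statement's English description precedes it below -/
import Mathlib

section
/- Every finite connected simple graph G is the neighbourhood graph of some connected partition of ℝ³ by regular closed polyhedra: there exist nonempty regular closed polyhedral sets X_v (v a vertex of G) with connected, pairwise disjoint interiors summing to ℝ³, such that for distinct vertices u, v, the interior of X_u ∪ X_v is connected if and only if {u,v} is an edge of G. -/
/-- Membership in the Boolean subalgebra of `RC(ℝ³)` generated by closed half-spaces:
regular closed polyhedra. -/
inductive IsPolyhedron3 : Set (Fin 3 → ℝ) → Prop
  | halfspace (a : Fin 3 → ℝ) (c : ℝ) (ha : a ≠ 0) :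
      IsPolyhedron3 {x | ∑ i, a i * x i ≤ c}
  | sup (X Y : Set (Fin 3 → ℝ)) : IsPolyhedron3 X → IsPolyhedron3 Y → IsPolyhedron3 (X ∪ Y)
  | inf (X Y : Set (Fin 3 → ℝ)) : IsPolyhedron3 X → IsPolyhedron3 Y →
      IsPolyhedron3 (closure (interior (X ∩ Y)))
  | compl (X : Set (Fin 3 → ℝ)) : IsPolyhedron3 X → IsPolyhedron3 (closure Xᶜ)

namespace NG

abbrev E3 := Fin 3 → ℝ

def pr (p : E3) : ℝ × ℝ := (p 0, p 1)

def mk3 (q : ℝ × ℝ) (z : ℝ) : E3 := ![q.1, q.2, z]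

lemma mk3_two (q : ℝ × ℝ) (z : ℝ) : mk3 q z 2 = z := by simp [mk3]
lemma pr_mk3 (q : ℝ × ℝ) (z : ℝ) : pr (mk3 q z) = q := by simp [mk3, pr]
lemma mk3_pr (p : E3) : mk3 (pr p) (p 2) = p := by
  ext i; fin_cases i <;> simp [mk3, pr]

lemma continuous_pr : Continuous pr := by unfold pr; fun_prop

lemma continuous_mk3 : Continuous (fun x : (ℝ × ℝ) × ℝ => mk3 x.1 x.2) := by
  unfold mk3
  refine continuous_pi fun i => ?_
  fin_cases i <;> simp <;> fun_prop

lemma continuous_mk3_right (q : ℝ × ℝ) : Continuous (fun z => mk3 q z) :=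
  continuous_mk3.comp (by fun_prop : Continuous fun z : ℝ => (q, z))

lemma continuous_mk3_left (z : ℝ) : Continuous (fun p : E3 => mk3 (pr p) z) :=
  continuous_mk3.comp (by have := continuous_pr; fun_prop : Continuous fun p : E3 => (pr p, z))

lemma mem_closure_vert {S : Set E3} {T : Set ℝ} (p : E3) (hp : p 2 ∈ closure T)
    (h : ∀ z ∈ T, mk3 (pr p) z ∈ S) : p ∈ closure S := by
  have := map_mem_closure (continuous_mk3_right (pr p)) hp h
  rwa [mk3_pr] at this

lemma continuous_two : Continuous (fun p : E3 => p 2) := by fun_prop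

section epi
variable {F G : ℝ × ℝ → ℝ}

lemma isOpen_gt (hF : Continuous F) : IsOpen {p : E3 | F (pr p) < p 2} :=
  isOpen_lt (hF.comp continuous_pr) continuous_two
lemma isOpen_lt' (hF : Continuous F) : IsOpen {p : E3 | p 2 < F (pr p)} :=
  isOpen_lt continuous_two (hF.comp continuous_pr)
lemma isClosed_ge (hF : Continuous F) : IsClosed {p : E3 | F (pr p) ≤ p 2} :=
  isClosed_le (hF.comp continuous_pr) continuous_two
lemma isClosed_le' (hF : Continuous F) : IsClosed {p : E3 | p 2 ≤ F (pr p)} :=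
  isClosed_le continuous_two (hF.comp continuous_pr)

lemma closure_gt (hF : Continuous F) :
    closure {p : E3 | F (pr p) < p 2} = {p : E3 | F (pr p) ≤ p 2} := by
  apply subset_antisymm
  · exact closure_minimal (fun p hp => by simp at hp ⊢; exact hp.le) (isClosed_ge hF)
  · intro p hp
    refine mem_closure_vert (T := Set.Ioi (p 2)) p (by simp) ?_
    intro z hz
    simp only [Set.mem_ofPred_eq, pr_mk3, mk3_two] at *
    exact lt_of_le_of_lt hp hz

lemma closure_lt'' (hF : Continuous F) :
    closure {p : E3 | p 2 < F (pr p)} = {p : E3 | p 2 ≤ F (pr p)} := by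
  apply subset_antisymm
  · exact closure_minimal (fun p hp => by simp at hp ⊢; exact hp.le) (isClosed_le' hF)
  · intro p hp
    refine mem_closure_vert (T := Set.Iio (p 2)) p (by simp) ?_
    intro z hz
    simp only [Set.mem_ofPred_eq, pr_mk3, mk3_two] at *
    exact lt_of_lt_of_le hz hp

lemma interior_ge (hF : Continuous F) :
    interior {p : E3 | F (pr p) ≤ p 2} = {p : E3 | F (pr p) < p 2} := by
  have : {p : E3 | F (pr p) ≤ p 2} = {p : E3 | p 2 < F (pr p)}ᶜ := by ext; simp
  rw [this, interior_compl, closure_lt'' hF]; ext; simp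

lemma interior_le' (hF : Continuous F) :
    interior {p : E3 | p 2 ≤ F (pr p)} = {p : E3 | p 2 < F (pr p)} := by
  have : {p : E3 | p 2 ≤ F (pr p)} = {p : E3 | F (pr p) < p 2}ᶜ := by ext; simp
  rw [this, interior_compl, closure_gt hF]; ext; simp

/-- continuous, with polyhedral epigraph -/
def Good (F : ℝ × ℝ → ℝ) : Prop :=
  Continuous F ∧ IsPolyhedron3 {p : E3 | F (pr p) ≤ p 2}

lemma Good.hypo (h : Good F) : IsPolyhedron3 {p : E3 | p 2 ≤ F (pr p)} := by
  have := IsPolyhedron3.compl _ h.2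
  have e : {p : E3 | F (pr p) ≤ p 2}ᶜ = {p : E3 | p 2 < F (pr p)} := by ext; simp
  rwa [e, closure_lt'' h.1] at this

lemma Good.max (hF : Good F) (hG : Good G) : Good (fun q => max (F q) (G q)) := by
  refine ⟨hF.1.max hG.1, ?_⟩
  have h := IsPolyhedron3.inf _ _ hF.2 hG.2
  have hc : Continuous (fun q => Max.max (F q) (G q)) := hF.1.max hG.1
  have e : {p : E3 | F (pr p) ≤ p 2} ∩ {p : E3 | G (pr p) ≤ p 2}
      = {p : E3 | Max.max (F (pr p)) (G (pr p)) ≤ p 2} := by ext; simp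
  rw [e, interior_ge hc, closure_gt hc] at h
  exact h

lemma Good.min (hF : Good F) (hG : Good G) : Good (fun q => min (F q) (G q)) := by
  refine ⟨hF.1.min hG.1, ?_⟩
  have h := IsPolyhedron3.sup _ _ hF.2 hG.2
  have e : {p : E3 | F (pr p) ≤ p 2} ∪ {p : E3 | G (pr p) ≤ p 2}
      = {p : E3 | Min.min (F (pr p)) (G (pr p)) ≤ p 2} := by ext; simp
  rwa [e] at h

lemma good_affine (α β γ : ℝ) : Good (fun q => α * q.1 + β * q.2 + γ) := by
  refine ⟨by fun_prop, ?_⟩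
  have h := IsPolyhedron3.halfspace ![α, β, -1] (-γ) (by
    intro h; have := congrFun h 2; simp at this)
  convert h using 1
  ext p
  simp [pr, Fin.sum_univ_three]
  constructor <;> intro h <;> linarith

lemma good_const (γ : ℝ) : Good (fun _ => γ) := by
  have := good_affine 0 0 γ
  simpa using this

end epi

lemma poly_univ : IsPolyhedron3 Set.univ := by
  have h := good_const 0
  have := IsPolyhedron3.sup _ _ h.2 h.hypo
  convert this using 1
  ext p; simp; exact le_total _ _

lemma poly_empty : IsPolyhedron3 ∅ := by
  simpa using IsPolyhedron3.compl _ poly_univ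

noncomputable def phi (d : ℕ) (q : ℝ × ℝ) : ℝ := max (|q.1 - 4 * d| - 1) (-q.2)

open Classical in
noncomputable def gg (a : ℕ → ℕ) (k d : ℕ) (q : ℝ × ℝ) : ℝ :=
  if a d < k ∧ k ≤ d then min (k : ℝ) (a d + 1 + ((k : ℝ) - a d - 1) * max 0 (phi d q)) else k

noncomputable def hh (a : ℕ → ℕ) (m k : ℕ) (q : ℝ × ℝ) : ℝ :=
  (Finset.range (m + 1)).inf' ⟨0, by simp⟩ (fun d => gg a k d q)

lemma good_gg (a : ℕ → ℕ) (k d : ℕ) : Good (gg a k d) := by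
  by_cases h : a d < k ∧ k ≤ d
  · have hc : (0 : ℝ) ≤ (k : ℝ) - a d - 1 := by
      have : ((a d + 1 : ℕ) : ℝ) ≤ k := by exact_mod_cast h.1
      push_cast at this; linarith
    set c := (k : ℝ) - a d - 1 with hcdef
    have e : gg a k d = fun q => min (k : ℝ) (max ((a d : ℝ) + 1)
      (max (max (c * q.1 + 0 * q.2 + (a d + 1 - c * (4 * d + 1)))
        ((-c) * q.1 + 0 * q.2 + (a d + 1 + c * (4 * d - 1))))
        (0 * q.1 + (-c) * q.2 + (a d + 1)))) := by
      funext q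
      simp only [gg, if_pos h, phi, ← hcdef]
      congr 1
      rw [mul_max_of_nonneg _ _ hc, mul_max_of_nonneg _ _ hc, abs_eq_max_neg, ← max_sub_sub_right,
        mul_max_of_nonneg _ _ hc, ← max_add_add_left, ← max_add_add_left, ← max_add_add_left]
      congr 1
      · ring
      congr 1
      · congr 1 <;> ring
      · ring
    rw [e]
    exact (good_const _).min ((good_const _).max
      (((good_affine _ _ _).max (good_affine _ _ _)).max (good_affine _ _ _)))
  · have e : gg a k d = fun _ => (k : ℝ) := by funext q; simp [gg, h]
    rw [e]; exact good_const _

lemma good_hh (a : ℕ → ℕ) (m k : ℕ) : Good (hh a m k) := by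
  have e : hh a m k = (Finset.range (m + 1)).inf' ⟨0, by simp⟩ (fun d => gg a k d) := by
    funext q; exact (Finset.inf'_apply _ (fun d => gg a k d) q).symm
  rw [e]
  exact Finset.inf'_induction _ _ (fun f hf g hg => hf.min hg) (fun d _ => good_gg a k d)

lemma gg_of_one_le {a : ℕ → ℕ} {k d : ℕ} {q : ℝ × ℝ} (h : 1 ≤ phi d q) : gg a k d q = k := by
  unfold gg
  split_ifs with hk
  · apply min_eq_left
    have : ((a d + 1 : ℕ) : ℝ) ≤ k := by exact_mod_cast hk.1
    push_cast at this
    have h2 : 1 ≤ max 0 (phi d q) := le_max_of_le_right h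
    nlinarith
  · rfl

lemma gg_le {a : ℕ → ℕ} {k d : ℕ} {q : ℝ × ℝ} : gg a k d q ≤ k := by
  unfold gg; split_ifs <;> simp

lemma phi_sep {d e : ℕ} {q : ℝ × ℝ} (hd : phi d q < 1) (hne : e ≠ d) : 1 ≤ phi e q := by
  by_contra! he
  simp only [phi, max_lt_iff] at hd he
  have h1 := abs_lt.1 (by linarith [hd.1] : |q.1 - 4 * d| < 2)
  have h2 := abs_lt.1 (by linarith [he.1] : |q.1 - 4 * e| < 2)
  rcases lt_or_gt_of_ne hne with h | h
  · have : ((e + 1 : ℕ) : ℝ) ≤ d := by exact_mod_cast h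
    push_cast at this; linarith
  · have : ((d + 1 : ℕ) : ℝ) ≤ e := by exact_mod_cast h
    push_cast at this; linarith

lemma hh_eq_of {a : ℕ → ℕ} {m d : ℕ} {q : ℝ × ℝ} (hd : d ≤ m)
    (h : ∀ e, e ≤ m → e ≠ d → 1 ≤ phi e q) (k : ℕ) : hh a m k q = gg a k d q := by
  apply le_antisymm
  · exact Finset.inf'_le (fun d => gg a k d q) (by simp; omega)
  · apply Finset.le_inf'
    intro e he
    by_cases hed : e = d
    · rw [hed]
    · rw [gg_of_one_le (h e (by simp at he; omega) hed)]; exact gg_le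

lemma hh_hole {a : ℕ → ℕ} {m d : ℕ} {q : ℝ × ℝ} (hd : d ≤ m) (h : phi d q < 1) (k : ℕ) :
    hh a m k q = gg a k d q := hh_eq_of hd (fun _ _ hne => phi_sep h hne) k

lemma hh_base {a : ℕ → ℕ} {m : ℕ} {q : ℝ × ℝ} (h : ∀ e, e ≤ m → 1 ≤ phi e q) (k : ℕ) :
    hh a m k q = k := by
  rw [hh_eq_of (Nat.zero_le m) (fun e he _ => h e he), gg_of_one_le (h 0 (by omega))]

lemma hh_low {a : ℕ → ℕ} {m : ℕ} {q : ℝ × ℝ} (h : q.2 ≤ -1) (k : ℕ) :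
    hh a m k q = k :=
  hh_base (fun e _ => le_max_of_le_right (by linarith)) k

lemma gg_succ_le {a : ℕ → ℕ} {k d : ℕ} {q : ℝ × ℝ} : gg a k d q ≤ gg a (k+1) d q := by
  by_cases h2 : a d < k + 1 ∧ k + 1 ≤ d
  · have hP : (0:ℝ) ≤ max 0 (phi d q) := le_max_left _ _
    by_cases h1 : a d < k ∧ k ≤ d
    · simp only [gg, if_pos h1, if_pos h2]
      push_cast
      apply min_le_min
      · linarith
      · nlinarith
    · have : k = a d := by omega
      simp only [gg, if_neg h1, if_pos h2]
      subst this
      push_cast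
      apply le_min
      · linarith
      · nlinarith
  · refine gg_le.trans ?_
    simp only [gg, if_neg h2]; push_cast; linarith

lemma gg_lt {a : ℕ → ℕ} {k d : ℕ} {q : ℝ × ℝ} (h : 0 < phi d q ∨ ¬ (a d < k ∧ k < d)) :
    gg a k d q < gg a (k+1) d q := by
  by_cases h2 : a d < k + 1 ∧ k + 1 ≤ d
  · have hP : (0:ℝ) ≤ max 0 (phi d q) := le_max_left _ _
    by_cases h1 : a d < k ∧ k ≤ d
    · have hp : 0 < phi d q := by
        rcases h with h | h
        · exact h
        · exact absurd ⟨h1.1, by omega⟩ h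
      have hP : (0:ℝ) < max 0 (phi d q) := lt_max_of_lt_right hp
      simp only [gg, if_pos h1, if_pos h2]
      push_cast
      apply min_lt_min
      · linarith
      · nlinarith
    · have : k = a d := by omega
      simp only [gg, if_neg h1, if_pos h2]
      subst this
      push_cast
      apply lt_min
      · linarith
      · nlinarith
  · refine gg_le.trans_lt ?_
    simp only [gg, if_neg h2]; push_cast; linarith

lemma gg_in {a : ℕ → ℕ} {k d : ℕ} {q : ℝ × ℝ} (hp : phi d q ≤ 0) (h1 : a d < k) (h2 : k ≤ d) :
    gg a k d q = a d + 1 := by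
  have : ((a d + 1 : ℕ) : ℝ) ≤ k := by exact_mod_cast h1
  push_cast at this
  simp [gg, h1, h2, max_eq_left hp, this]

lemma gg_out {a : ℕ → ℕ} {k d : ℕ} {q : ℝ × ℝ} (h : ¬ (a d < k ∧ k ≤ d)) :
    gg a k d q = k := by simp [gg, h]

lemma exists_d (a : ℕ → ℕ) (m : ℕ) (q : ℝ × ℝ) : ∃ d ≤ m, ∀ k, hh a m k q = gg a k d q := by
  by_cases h : ∃ d ≤ m, phi d q < 1
  · obtain ⟨d, hd, h⟩ := h
    exact ⟨d, hd, hh_hole hd h⟩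
  · push Not at h
    exact ⟨0, by omega, hh_eq_of (by omega) (fun e he _ => h e he)⟩

lemma hh_mono (a : ℕ → ℕ) (m : ℕ) (q : ℝ × ℝ) : Monotone (fun k => hh a m k q) := by
  obtain ⟨d, -, hd⟩ := exists_d a m q
  refine monotone_nat_of_le_succ fun k => ?_
  simp only [hd]; exact gg_succ_le

/-- strictness unless in a hole -/
lemma hh_lt {a : ℕ → ℕ} {m : ℕ} {q : ℝ × ℝ} {k : ℕ}
    (h : ∀ d ≤ m, a d < k → k < d → 0 < phi d q) : hh a m k q < hh a m (k+1) q := by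
  obtain ⟨d, hdm, hd⟩ := exists_d a m q
  rw [hd, hd]
  apply gg_lt
  by_cases h1 : a d < k ∧ k < d
  · exact Or.inl (h d hdm h1.1 h1.2)
  · exact Or.inr h1

lemma hh_eq {a : ℕ → ℕ} {m : ℕ} {q : ℝ × ℝ} {k d : ℕ}
    (hd : d ≤ m) (h1 : a d < k) (h2 : k < d) (hp : phi d q ≤ 0) :
    hh a m k q = hh a m (k+1) q := by
  rw [hh_hole hd (by linarith), hh_hole hd (by linarith), gg_in hp h1 h2.le,
    gg_in hp (by omega) (by omega)]

end NG

namespace NG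

section layers
variable (a : ℕ → ℕ) (m : ℕ)

def Lo (k : ℕ) : Set E3 := {p | k = 0 ∨ hh a m k (pr p) ≤ p 2}
def Hi (k : ℕ) : Set E3 := {p | m < k ∨ p 2 ≤ hh a m k (pr p)}
def U (k : ℕ) : Set E3 :=
  {p | (k = 0 ∨ hh a m k (pr p) < p 2) ∧ (m < k + 1 ∨ p 2 < hh a m (k+1) (pr p))}

variable {a m}

lemma mem_U {k : ℕ} {p : E3} : p ∈ U a m k ↔ (k = 0 ∨ hh a m k (pr p) < p 2) ∧
    (m < k + 1 ∨ p 2 < hh a m (k+1) (pr p)) := by simp [U]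

lemma poly_Lo (k : ℕ) : IsPolyhedron3 (Lo a m k) := by
  by_cases h : k = 0
  · have : Lo a m k = Set.univ := by ext; simp [Lo, h]
    rw [this]; exact poly_univ
  · have : Lo a m k = {p : E3 | hh a m k (pr p) ≤ p 2} := by ext; simp [Lo, h]
    rw [this]; exact (good_hh a m k).2

lemma poly_Hi (k : ℕ) : IsPolyhedron3 (Hi a m k) := by
  by_cases h : m < k
  · have : Hi a m k = Set.univ := by ext; simp [Hi, h]
    rw [this]; exact poly_univ
  · have : Hi a m k = {p : E3 | p 2 ≤ hh a m k (pr p)} := by ext; simp [Hi, h]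
    rw [this]; exact (good_hh a m k).hypo

lemma int_Lo (k : ℕ) : interior (Lo a m k) = {p | k = 0 ∨ hh a m k (pr p) < p 2} := by
  by_cases h : k = 0
  · have : Lo a m k = Set.univ := by ext; simp [Lo, h]
    rw [this]; simp [h]
  · have : Lo a m k = {p : E3 | hh a m k (pr p) ≤ p 2} := by ext; simp [Lo, h]
    rw [this, interior_ge (good_hh a m k).1]; simp [h]

lemma int_Hi (k : ℕ) : interior (Hi a m k) = {p | m < k ∨ p 2 < hh a m k (pr p)} := by
  by_cases h : m < k
  · have : Hi a m k = Set.univ := by ext; simp [Hi, h]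
    rw [this]; simp [h]
  · have : Hi a m k = {p : E3 | p 2 ≤ hh a m k (pr p)} := by ext; simp [Hi, h]
    rw [this, interior_le' (good_hh a m k).1]; simp [h]

lemma U_eq (k : ℕ) : U a m k = interior (Lo a m k ∩ Hi a m (k+1)) := by
  rw [interior_inter, int_Lo, int_Hi]; ext; simp [U]

lemma isOpen_U (k : ℕ) : IsOpen (U a m k) := by rw [U_eq]; exact isOpen_interior

lemma poly_closure_U (k : ℕ) : IsPolyhedron3 (closure (U a m k)) := by
  rw [U_eq]; exact .inf _ _ (poly_Lo k) (poly_Hi (k+1))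

lemma U_disj_lt {k l : ℕ} (hkl : k < l) (hl : l ≤ m) {p : E3} (hk : p ∈ U a m k)
    (hp : p ∈ U a m l) : False := by
  rw [mem_U] at hk hp
  have h1 := hk.2.resolve_left (by omega)
  have h2 := hp.1.resolve_left (by omega)
  have := hh_mono a m (pr p) (show k + 1 ≤ l by omega)
  simp only at this
  linarith

lemma U_disj {k l : ℕ} (hk : k ≤ m) (hl : l ≤ m) {p : E3} (h1 : p ∈ U a m k)
    (h2 : p ∈ U a m l) : k = l := by
  rcases lt_trichotomy k l with h | h | h
  · exact (U_disj_lt h hl h1 h2).elim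
  · exact h
  · exact (U_disj_lt h hk h2 h1).elim

variable (a m) in
def DD : Set E3 := {p | ∀ k ≤ m, p 2 ≠ hh a m k (pr p)}

lemma DD_vert (q : ℝ × ℝ) : Dense {z : ℝ | mk3 q z ∈ DD a m} := by
  have hf : ((fun k => hh a m k q) '' Set.Iic m).Finite := (Set.finite_Iic m).image _
  refine (hf.countable.dense_compl ℝ).mono ?_
  intro z hz
  simp only [DD, Set.mem_ofPred_eq, mk3_two, pr_mk3]
  intro k hk e
  exact hz ⟨k, hk, e.symm⟩

lemma DD_dense : Dense (DD a m) := fun p =>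
  mem_closure_vert p (DD_vert (pr p) (p 2)) (fun z hz => by simpa using hz)

lemma DD_U {p : E3} (hp : p ∈ DD a m) : ∃ k ≤ m, p ∈ U a m k := by
  classical
  simp only [DD, Set.mem_ofPred_eq] at hp
  set P : ℕ → Prop := fun k => k = 0 ∨ hh a m k (pr p) < p 2 with hP
  refine ⟨Nat.findGreatest P m, Nat.findGreatest_le m, ?_⟩
  rw [mem_U]
  refine ⟨Nat.findGreatest_spec (P := P) (Nat.zero_le m) (Or.inl rfl), ?_⟩
  by_cases h : m < Nat.findGreatest P m + 1
  · exact Or.inl h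
  · right
    have := Nat.findGreatest_is_greatest (P := P) (n := m) (k := Nat.findGreatest P m + 1)
      (by omega) (by omega)
    simp only [hP, not_or, not_lt] at this
    exact lt_of_le_of_ne this.2 (hp _ (by omega))

lemma subset_closure_DD {N : Set E3} (hN : IsOpen N) : N ⊆ closure (N ∩ DD a m) := 
  DD_dense.open_subset_closure_inter hN

/-- connectedness of layers -/
lemma conn_base (k : ℕ) : IsPreconnected {q : ℝ × ℝ | k = 0 ∨ hh a m k q < hh a m (k+1) q} := by
  by_cases h0 : k = 0
  · simpa [h0] using isPreconnected_univ
  simp only [h0, false_or]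
  have hlow : ∀ q : ℝ × ℝ, q.2 < -2 → hh a m k q < hh a m (k+1) q := by
    intro q hq
    rw [hh_low (by linarith), hh_low (by linarith)]; push_cast; linarith
  refine isPreconnected_of_forall ((0, -3) : ℝ × ℝ) ?_
  intro q hq
  simp only [Set.mem_ofPred_eq] at hq
  refine ⟨(Set.univ ×ˢ Set.Iio (-2)) ∪ ({q.1} ×ˢ Set.Iic q.2), ?_, ?_, ?_, ?_⟩
  · rintro r (hr | hr)
    · exact hlow r (by simpa using hr)
    · simp only [Set.mem_prod, Set.mem_singleton_iff, Set.mem_Iic] at hr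
      simp only [Set.mem_ofPred_eq]
      apply hh_lt
      intro d hd h1 h2
      by_contra! hp
      have : phi d q ≤ 0 := by
        refine le_trans ?_ hp
        unfold phi
        rw [hr.1]
        exact max_le_max le_rfl (by linarith [hr.2])
      have := hh_eq hd h1 h2 this
      linarith
  · left; simp; norm_num
  · right; simp
  · refine IsPreconnected.union (q.1, min q.2 (-3)) ?_ ?_ ?_ ?_
    · simp; right; norm_num
    · simp
    · exact isPreconnected_univ.prod isPreconnected_Iio
    · exact isPreconnected_singleton.prod isPreconnected_Iic

lemma conn_U (hm : 1 ≤ m) (k : ℕ) (hk : k ≤ m) : IsPreconnected (U a m k) := by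
  have c1 := (good_hh a m k).1
  have c2 := (good_hh a m (k+1)).1
  by_cases h0 : k = 0
  · have : U a m k = (fun x : (ℝ × ℝ) × ℝ => mk3 x.1 (hh a m (k+1) x.1 - x.2)) ''
        (Set.univ ×ˢ Set.Ioi 0) := by
      ext p
      rw [mem_U]
      constructor
      · rintro ⟨-, h⟩
        have h := h.resolve_left (by omega)
        refine ⟨(pr p, hh a m (k+1) (pr p) - p 2), by simpa using h, ?_⟩
        simp [mk3_pr]
      · rintro ⟨⟨q, s⟩, hs, rfl⟩
        simp only [Set.mem_prod, Set.mem_Ioi] at hs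
        simp only [mk3_two, pr_mk3]
        exact ⟨Or.inl h0, Or.inr (by linarith [hs.2])⟩
    rw [this]
    refine (isPreconnected_univ.prod isPreconnected_Ioi).image _ (Continuous.continuousOn ?_)
    exact continuous_mk3.comp (by fun_prop :
      Continuous fun x : (ℝ × ℝ) × ℝ => (x.1, hh a m (k+1) x.1 - x.2))
  by_cases hkm : k = m
  · have : U a m k = (fun x : (ℝ × ℝ) × ℝ => mk3 x.1 (hh a m k x.1 + x.2)) ''
        (Set.univ ×ˢ Set.Ioi 0) := by
      ext p
      rw [mem_U]
      constructor
      · rintro ⟨h, -⟩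
        have h := h.resolve_left (by omega)
        refine ⟨(pr p, p 2 - hh a m k (pr p)), by simpa using h, ?_⟩
        simp [mk3_pr]
      · rintro ⟨⟨q, s⟩, hs, rfl⟩
        simp only [Set.mem_prod, Set.mem_Ioi] at hs
        simp only [mk3_two, pr_mk3]
        exact ⟨Or.inr (by linarith [hs.2]), Or.inl (by omega)⟩
    rw [this]
    refine (isPreconnected_univ.prod isPreconnected_Ioi).image _ (Continuous.continuousOn ?_)
    exact continuous_mk3.comp (by fun_prop :
      Continuous fun x : (ℝ × ℝ) × ℝ => (x.1, hh a m k x.1 + x.2))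
  have hb := conn_base (a := a) (m := m) k
  simp only [h0, false_or] at hb
  have : U a m k = (fun x : (ℝ × ℝ) × ℝ =>
      mk3 x.1 (hh a m k x.1 + x.2 * (hh a m (k+1) x.1 - hh a m k x.1))) ''
        ({q : ℝ × ℝ | hh a m k q < hh a m (k+1) q} ×ˢ Set.Ioo 0 1) := by
    ext p
    rw [mem_U]
    constructor
    · rintro ⟨h, h'⟩
      have h := h.resolve_left (by omega)
      have h' := h'.resolve_left (by omega)
      have hpos : 0 < hh a m (k+1) (pr p) - hh a m k (pr p) := by linarith
      refine ⟨(pr p, (p 2 - hh a m k (pr p)) / (hh a m (k+1) (pr p) - hh a m k (pr p))), ?_, ?_⟩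
      · simp only [Set.mem_prod, Set.mem_ofPred_eq, Set.mem_Ioo]
        refine ⟨by linarith, div_pos (by linarith) hpos, ?_⟩
        rw [div_lt_one hpos]; linarith
      · simp only
        rw [div_mul_cancel₀ _ hpos.ne']
        simp [mk3_pr]
    · rintro ⟨⟨q, s⟩, hs, rfl⟩
      simp only [Set.mem_prod, Set.mem_ofPred_eq, Set.mem_Ioo] at hs
      simp only [mk3_two, pr_mk3]
      obtain ⟨h1, h2, h3⟩ := hs
      exact ⟨Or.inr (by nlinarith), Or.inr (by nlinarith)⟩
  rw [this]
  refine (hb.prod isPreconnected_Ioo).image _ (Continuous.continuousOn ?_)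
  exact continuous_mk3.comp (by fun_prop :
    Continuous fun x : (ℝ × ℝ) × ℝ =>
      (x.1, hh a m k x.1 + x.2 * (hh a m (k+1) x.1 - hh a m k x.1)))

/-- Points of the base region. -/
lemma base_mem {k : ℕ} {p : E3} (hy : p 1 ≤ -1) (h1 : (k : ℝ) < p 2) (h2 : p 2 < k + 1) :
    p ∈ U a m k := by
  have hy' : (pr p).2 ≤ -1 := hy
  rw [mem_U, hh_low hy', hh_low hy']
  push_cast
  exact ⟨Or.inr h1, Or.inr h2⟩

lemma ball_coords {x y z : ℝ} {p : E3} (hp : p ∈ Metric.ball (![x, y, z] : E3) 1) :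
    (x - 1 < p 0 ∧ p 0 < x + 1) ∧ (y - 1 < p 1 ∧ p 1 < y + 1) ∧ (z - 1 < p 2 ∧ p 2 < z + 1) := by
  rw [Metric.mem_ball, dist_pi_lt_iff (by norm_num)] at hp
  have h0 := hp 0
  have h1 := hp 1
  have h2 := hp 2
  simp [Real.dist_eq, abs_lt] at h0 h1 h2
  refine ⟨⟨?_, ?_⟩, ⟨?_, ?_⟩, ⟨?_, ?_⟩⟩ <;> linarith

lemma mem_ball_of {x y z z' : ℝ} (h : |z' - z| < 1) :
    (![x, y, z'] : E3) ∈ Metric.ball (![x, y, z] : E3) 1 := by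
  rw [Metric.mem_ball, dist_pi_lt_iff (by norm_num)]
  intro i
  fin_cases i <;> simp [Real.dist_eq, h]

/-- two layers meeting along a horizontal plane in a unit box -/
def Touch (A B : Set E3) : Prop := ∃ N : Set E3, IsOpen N ∧ IsPreconnected N ∧
  (N ∩ A).Nonempty ∧ (N ∩ B).Nonempty ∧ N ⊆ closure (A ∪ B)

lemma touch_base (k : ℕ) (hk : k < m) : Touch (U a m k) (U a m (k+1)) := by
  refine ⟨Metric.ball (![0, -3, (k:ℝ) + 1] : E3) 1, Metric.isOpen_ball,
    (convex_ball _ _).isPreconnected, ⟨![0, -3, (k:ℝ) + 1/2], mem_ball_of ?_, base_mem ?_ ?_ ?_⟩,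
    ⟨![0, -3, (k:ℝ) + 3/2], mem_ball_of ?_, base_mem ?_ ?_ ?_⟩, ?_⟩
  · rw [abs_lt]; constructor <;> linarith
  · simp
  · simp
  · simp; norm_num
  · rw [abs_lt]; constructor <;> linarith
  · simp
  · simp; norm_num
  · simp; linarith
  · refine (subset_closure_DD (a := a) (m := m) Metric.isOpen_ball).trans (closure_mono ?_)
    rintro p ⟨hp, hD⟩
    obtain ⟨-, ⟨h1, h2⟩, h3, h4⟩ := ball_coords hp
    simp only [DD, Set.mem_ofPred_eq] at hD
    have := hD (k+1) hk
    rw [hh_low (show (pr p).2 ≤ -1 by simp [pr]; linarith)] at this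
    push_cast at this
    rcases lt_or_gt_of_ne this with h | h
    · left; exact base_mem (by linarith) (by linarith) h
    · right; exact base_mem (by linarith) (by push_cast; linarith) (by push_cast; linarith)

lemma touch_hole (k : ℕ) (hk : k ≤ m) (hak : a k < k) : Touch (U a m (a k)) (U a m k) := by
  have hak' : ((a k + 1 : ℕ) : ℝ) ≤ k := by exact_mod_cast hak
  push_cast at hak'
  have key1 : ∀ p : E3, phi k (pr p) ≤ 0 → (a k : ℝ) < p 2 → p 2 < a k + 1 → p ∈ U a m (a k) := by
    intro p hp h1 h2
    rw [mem_U, hh_hole hk (by linarith), hh_hole hk (by linarith), gg_out (by omega),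
      gg_in hp (by omega) (by omega)]
    exact ⟨Or.inr h1, Or.inr h2⟩
  have key2 : ∀ p : E3, phi k (pr p) ≤ 0 → (a k : ℝ) + 1 < p 2 → p 2 < k + 1 → p ∈ U a m k := by
    intro p hp h1 h2
    rw [mem_U, hh_hole hk (by linarith), hh_hole hk (by linarith), gg_in hp (by omega) (by omega),
      gg_out (by omega)]
    push_cast
    exact ⟨Or.inr h1, Or.inr h2⟩
  have hphi : ∀ z : ℝ, phi k (pr (![4 * (k:ℝ), 1, z] : E3)) ≤ 0 := by
    intro z; simp [phi, pr]
  refine ⟨Metric.ball (![4 * (k:ℝ), 1, (a k:ℝ) + 1] : E3) 1, Metric.isOpen_ball,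
    (convex_ball _ _).isPreconnected,
    ⟨![4 * (k:ℝ), 1, (a k:ℝ) + 1/2], mem_ball_of ?_, key1 _ (hphi _) ?_ ?_⟩,
    ⟨![4 * (k:ℝ), 1, (a k:ℝ) + 3/2], mem_ball_of ?_, key2 _ (hphi _) ?_ ?_⟩, ?_⟩
  · rw [abs_lt]; constructor <;> linarith
  · simp
  · simp; norm_num
  · rw [abs_lt]; constructor <;> linarith
  · simp; norm_num
  · simp; linarith
  · refine (subset_closure_DD (a := a) (m := m) Metric.isOpen_ball).trans (closure_mono ?_)
    rintro p ⟨hp, hD⟩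
    obtain ⟨⟨h5, h6⟩, ⟨h1, h2⟩, h3, h4⟩ := ball_coords hp
    simp only [DD, Set.mem_ofPred_eq] at hD
    have hph : phi k (pr p) ≤ 0 := by
      simp only [phi, pr, max_le_iff]
      refine ⟨?_, by linarith⟩
      have : |p 0 - 4 * k| ≤ 1 := by rw [abs_le]; constructor <;> linarith
      linarith
    have := hD k hk
    rw [hh_hole hk (by linarith), gg_in hph (by omega) (by omega)] at this
    rcases lt_or_gt_of_ne this with h | h
    · left; exact key1 p hph (by linarith) h
    · right; exact key2 p hph h (by linarith)

lemma U_nonempty (k : ℕ) : (U a m k).Nonempty :=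
  ⟨![0, -3, (k:ℝ) + 1/2], base_mem (by simp) (by simp) (by simp; norm_num)⟩

/-- structure of a column -/
lemma pinch {V : Type} {w : ℕ → V} (ha : ∀ k, a k ≤ k) (hw : ∀ k, w (a k) = w k) (q : ℝ × ℝ) :
    ∃ i j, i ≤ j ∧ j ≤ m ∧ w i = w j ∧ (∀ k, i < k → k < j → hh a m k q = hh a m (k+1) q) ∧
      (∀ k, ¬ (i < k ∧ k < j) → hh a m k q < hh a m (k+1) q) := by
  obtain ⟨d, hd, h⟩ := exists_d a m q
  by_cases hp : phi d q ≤ 0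
  · refine ⟨a d, d, ha d, hd, hw d, fun k h1 h2 => hh_eq hd h1 h2 hp, fun k hk => ?_⟩
    rw [h, h]; exact gg_lt (Or.inr hk)
  · refine ⟨0, 0, le_rfl, Nat.zero_le m, rfl, fun k h1 h2 => by omega, fun k hk => ?_⟩
    rw [h, h]; exact gg_lt (Or.inl (not_le.1 hp))

end layers
end NG

namespace NG

lemma exists_walk {V : Type} [Fintype V] (G : SimpleGraph V) (hG : G.Connected) :
    ∃ (m : ℕ) (w : ℕ → V), 1 ≤ m ∧ (∀ k, w k = w (k+1) ∨ G.Adj (w k) (w (k+1))) ∧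
      (∀ v, ∃ k ≤ m, w k = v) ∧ (∀ u v, G.Adj u v → ∃ k < m, w k = u ∧ w (k+1) = v) := by
  classical
  have v0 : V := hG.nonempty.some
  have key : ∀ l : List (V × V), ∃ (y : V) (p : G.Walk v0 y), ∀ e ∈ l,
      (∃ k ≤ p.length, p.getVert k = e.1) ∧
      (G.Adj e.1 e.2 → ∃ k < p.length, p.getVert k = e.1 ∧ p.getVert (k+1) = e.2) := by
    intro l
    induction l with
    | nil => exact ⟨v0, .nil, by simp⟩
    | cons e l ih =>
      obtain ⟨y, p, hp⟩ := ih
      obtain ⟨r⟩ := hG.preconnected y e.1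
      have hpr : ∀ (z : V) (s : G.Walk e.1 z), ∀ f ∈ l,
          (∃ k ≤ ((p.append r).append s).length, ((p.append r).append s).getVert k = f.1) ∧
          (G.Adj f.1 f.2 → ∃ k < ((p.append r).append s).length,
            ((p.append r).append s).getVert k = f.1 ∧
            ((p.append r).append s).getVert (k+1) = f.2) := by
        intro z s f hf
        obtain ⟨⟨k, hk, hk'⟩, h2⟩ := hp f hf
        have hget : ∀ k, k ≤ p.length → ((p.append r).append s).getVert k = p.getVert k := by
          intro k hk
          rw [← SimpleGraph.Walk.append_assoc, SimpleGraph.Walk.getVert_append]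
          split_ifs with h
          · rfl
          · have : k = p.length := by omega
            subst this; simp
        have hlen : p.length ≤ ((p.append r).append s).length := by
          simp only [SimpleGraph.Walk.length_append]; omega
        refine ⟨⟨k, by omega, by rw [hget k hk, hk']⟩, fun hadj => ?_⟩
        obtain ⟨k, hk, h3, h4⟩ := h2 hadj
        exact ⟨k, by omega, by rw [hget k hk.le, h3], by rw [hget (k+1) hk, h4]⟩
      by_cases hadj : G.Adj e.1 e.2
      · refine ⟨e.2, (p.append r).append (.cons hadj .nil), ?_⟩
        intro f hf
        rcases List.mem_cons.1 hf with rfl | hf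
        · have h1 : ((p.append r).append (.cons hadj .nil)).getVert (p.append r).length = f.1 := by
            rw [SimpleGraph.Walk.getVert_append]; simp
          have h2 : ((p.append r).append (.cons hadj .nil)).getVert ((p.append r).length + 1)
              = f.2 := by
            rw [SimpleGraph.Walk.getVert_append]; simp
          refine ⟨⟨_, ?_, h1⟩, fun _ => ⟨_, ?_, h1, h2⟩⟩ <;>
            simp [SimpleGraph.Walk.length_append]
        · exact hpr _ _ f hf
      · refine ⟨e.1, (p.append r).append .nil, ?_⟩
        intro f hf
        rcases List.mem_cons.1 hf with rfl | hf
        · refine ⟨⟨_, le_rfl, ?_⟩, fun h => absurd h hadj⟩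
          exact SimpleGraph.Walk.getVert_length _
        · exact hpr _ _ f hf
  obtain ⟨y, p, hp⟩ := key (Finset.univ : Finset (V × V)).toList
  refine ⟨p.length + 1, p.getVert, by omega, ?_, ?_, ?_⟩
  · intro k
    by_cases hk : k < p.length
    · exact Or.inr (p.adj_getVert_succ hk)
    · left
      rw [p.getVert_of_length_le (by omega), p.getVert_of_length_le (by omega)]
  · intro v
    obtain ⟨k, hk, h⟩ := (hp (v, v) (by simp)).1
    exact ⟨k, by omega, h⟩
  · intro u v h
    obtain ⟨k, hk, h⟩ := (hp (u, v) (by simp)).2 h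
    exact ⟨k, by omega, h⟩

section main
variable {V : Type} (a : ℕ → ℕ) (m : ℕ) (w : ℕ → V)

def EE (v : V) : Set E3 := ⋃ k ∈ {k | k ≤ m ∧ w k = v}, U a m k

def XX (v : V) : Set E3 := closure (EE a m w v)

variable {a m w}

lemma mem_EE {v : V} {p : E3} : p ∈ EE a m w v ↔ ∃ k, (k ≤ m ∧ w k = v) ∧ p ∈ U a m k := by
  simp [EE]

lemma isOpen_EE (v : V) : IsOpen (EE a m w v) :=
  isOpen_biUnion fun k _ => isOpen_U k

lemma U_sub_EE {k : ℕ} (hk : k ≤ m) : U a m k ⊆ EE a m w (w k) :=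
  fun _ hp => mem_EE.2 ⟨k, ⟨hk, rfl⟩, hp⟩

lemma poly_XX (v : V) : IsPolyhedron3 (XX a m w v) := by
  have hfin : {k | k ≤ m ∧ w k = v}.Finite := (Set.finite_Iic m).subset (fun k hk => hk.1)
  rw [XX, EE, hfin.closure_biUnion]
  generalize {k | k ≤ m ∧ w k = v} = S at hfin
  induction S, hfin using Set.Finite.induction_on with
  | empty => simpa using poly_empty
  | insert _ _ ih =>
    rw [Set.biUnion_insert]
    exact .sup _ _ (poly_closure_U _) ih

lemma EE_disj {u v : V} (h : u ≠ v) : Disjoint (EE a m w u) (EE a m w v) := by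
  rw [Set.disjoint_left]
  intro p hu hv
  obtain ⟨k, ⟨hk, rfl⟩, hpk⟩ := mem_EE.1 hu
  obtain ⟨l, ⟨hl, rfl⟩, hpl⟩ := mem_EE.1 hv
  exact h (by rw [U_disj hk hl hpk hpl])

lemma EE_sub_int (v : V) : EE a m w v ⊆ interior (XX a m w v) :=
  interior_maximal subset_closure (isOpen_EE v)

lemma XX_disj {u v : V} (h : u ≠ v) : Disjoint (interior (XX a m w u)) (interior (XX a m w v)) := by
  have h1 : Disjoint (EE a m w u) (XX a m w v) := (EE_disj h).closure_right (isOpen_EE u)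
  have h2 : Disjoint (EE a m w u) (interior (XX a m w v)) := h1.mono_right interior_subset
  have h3 : Disjoint (XX a m w u) (interior (XX a m w v)) := h2.closure_left isOpen_interior
  exact h3.mono_left interior_subset

lemma XX_reg (v : V) : XX a m w v = closure (interior (XX a m w v)) :=
  subset_antisymm (closure_mono (EE_sub_int v))
    (closure_minimal interior_subset isClosed_closure)

lemma mem_EE_of_U {u : V} {k : ℕ} (hk : k ≤ m) {p : E3} (hp : p ∈ U a m k)
    (hX : p ∈ XX a m w u) : w k = u := by
  by_contra hne
  have h1 : Disjoint (EE a m w (w k)) (XX a m w u) := (EE_disj hne).closure_right (isOpen_EE _)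
  exact Set.disjoint_left.1 h1 (U_sub_EE hk hp) hX

/-- Connectedness of the interior of each cell. -/
lemma XX_conn (hm : 1 ≤ m) {v : V} {r : ℕ} (hr : r ≤ m) (hrv : w r = v)
    (ha : ∀ k, w k = v → a k = r) (hle : ∀ k, w k = v → r ≤ k) :
    IsConnected (interior (XX a m w v)) := by
  obtain ⟨x, hx⟩ := U_nonempty (a := a) (m := m) r
  have hEr : U a m r ⊆ EE a m w v := by rw [← hrv]; exact U_sub_EE hr
  refine ⟨⟨x, EE_sub_int v (hEr hx)⟩, ?_⟩
  refine isPreconnected_of_forall x ?_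
  have main : ∀ y ∈ EE a m w v, ∃ t ⊆ interior (XX a m w v), x ∈ t ∧ y ∈ t ∧ IsPreconnected t := by
    intro y hy
    obtain ⟨k, ⟨hk, hkv⟩, hyk⟩ := mem_EE.1 hy
    by_cases hkr : k = r
    · subst hkr
      exact ⟨U a m k, hEr.trans (EE_sub_int v), hx, hyk, conn_U hm k hk⟩
    · have hlt : r < k := lt_of_le_of_ne (hle k hkv) (Ne.symm hkr)
      have hak := ha k hkv
      have hEk : U a m k ⊆ EE a m w v := by rw [← hkv]; exact U_sub_EE hk
      obtain ⟨N, hNo, hNc, ⟨s, hsN, hsU⟩, ⟨t, htN, htU⟩, hN⟩ :=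
        touch_hole (a := a) (m := m) k hk (by omega)
      rw [hak] at hsU hN
      refine ⟨(U a m r ∪ N) ∪ U a m k, ?_, Or.inl (Or.inl hx), Or.inr hyk, ?_⟩
      · refine Set.union_subset (Set.union_subset (hEr.trans (EE_sub_int v)) ?_)
          (hEk.trans (EE_sub_int v))
        exact interior_maximal (hN.trans (closure_mono (Set.union_subset hEr hEk))) hNo
      · exact IsPreconnected.union t (Or.inr htN) htU
          (IsPreconnected.union s hsU hsN (conn_U hm r hr) hNc) (conn_U hm k hk)
  -- pass to the closure
  have hT : IsPreconnected (⋃₀ {t | t ⊆ interior (XX a m w v) ∧ x ∈ t ∧ IsPreconnected t}) :=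
    isPreconnected_sUnion x _ (fun t ht => ht.2.1) (fun t ht => ht.2.2)
  have hT1 : ⋃₀ {t | t ⊆ interior (XX a m w v) ∧ x ∈ t ∧ IsPreconnected t} ⊆
      interior (XX a m w v) := Set.sUnion_subset fun t ht => ht.1
  have hT2 : EE a m w v ⊆ ⋃₀ {t | t ⊆ interior (XX a m w v) ∧ x ∈ t ∧ IsPreconnected t} := by
    intro y hy
    obtain ⟨t, h1, h2, h3, h4⟩ := main y hy
    exact ⟨t, ⟨h1, h2, h4⟩, h3⟩
  have hconn := hT.subset_closure hT1 (interior_subset.trans (closure_mono hT2))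
  intro y hy
  exact ⟨_, subset_rfl, EE_sub_int v (hEr hx), hy, hconn⟩

lemma XX_union : (⋃ v, XX a m w v) = Set.univ := by
  have hsub : DD a m ⊆ ⋃ k ∈ Set.Iic m, U a m k := by
    intro p hp
    obtain ⟨k, hk, h⟩ := DD_U hp
    simp only [Set.mem_iUnion]; exact ⟨k, hk, h⟩
  rw [Set.eq_univ_iff_forall]
  intro p
  have h := closure_mono hsub (DD_dense p)
  rw [(Set.finite_Iic m).closure_biUnion] at h
  simp only [Set.mem_iUnion] at h ⊢
  obtain ⟨k, hk, h⟩ := h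
  exact ⟨w k, closure_mono (U_sub_EE hk) h⟩

lemma adj_conn {u v : V} (hu : IsConnected (interior (XX a m w u)))
    (hv : IsConnected (interior (XX a m w v))) {k : ℕ} (hk : k < m) (h1 : w k = u)
    (h2 : w (k+1) = v) : IsConnected (interior (XX a m w u ∪ XX a m w v)) := by
  obtain ⟨N, hNo, hNc, ⟨s, hsN, hsU⟩, ⟨t, htN, htU⟩, hN⟩ := touch_base (a := a) (m := m) k hk
  have hEu : U a m k ⊆ EE a m w u := by rw [← h1]; exact U_sub_EE hk.le
  have hEv : U a m (k+1) ⊆ EE a m w v := by rw [← h2]; exact U_sub_EE hk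
  have hc : IsPreconnected ((interior (XX a m w u) ∪ N) ∪ interior (XX a m w v)) :=
    IsPreconnected.union t (Or.inr htN) (EE_sub_int v (hEv htU))
      (IsPreconnected.union s (EE_sub_int u (hEu hsU)) hsN hu.2 hNc) hv.2
  have hsub : ((interior (XX a m w u) ∪ N) ∪ interior (XX a m w v)) ⊆
      interior (XX a m w u ∪ XX a m w v) := by
    refine Set.union_subset (Set.union_subset (interior_mono Set.subset_union_left) ?_)
      (interior_mono Set.subset_union_right)
    refine interior_maximal (hN.trans ?_) hNo
    rw [closure_union]
    exact Set.union_subset_union (closure_mono hEu) (closure_mono hEv)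
  refine ⟨hu.1.mono (interior_mono Set.subset_union_left), hc.subset_closure hsub ?_⟩
  refine interior_subset.trans (Set.union_subset ?_ ?_)
  · conv_lhs => rw [XX_reg u]
    exact closure_mono (fun p hp => Or.inl (Or.inl hp))
  · conv_lhs => rw [XX_reg v]
    exact closure_mono (fun p hp => Or.inr hp)

/-- In one column of a box covered by two non-adjacent cells only one label occurs. -/
lemma column {G : SimpleGraph V} (hwalk : ∀ k, w k = w (k+1) ∨ G.Adj (w k) (w (k+1)))
    (ha : ∀ k, a k ≤ k) (hw : ∀ k, w (a k) = w k) {u v : V} (huv : u ≠ v) (hn : ¬ G.Adj u v)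
    (q : ℝ × ℝ) {z1 z2 : ℝ} {k l : ℕ} (hkl : k < l) (hl : l ≤ m)
    (hk1 : mk3 q z1 ∈ U a m k) (hl2 : mk3 q z2 ∈ U a m l) (hku : w k = u) (hlv : w l = v)
    (hN : ∀ z ∈ Set.Icc z1 z2, mk3 q z ∈ XX a m w u ∪ XX a m w v) : False := by
  obtain ⟨i, j, hij, hjm, hwij, hpin, hpos⟩ := pinch (m := m) ha hw q
  rw [mem_U] at hk1 hl2
  simp only [mk3_two, pr_mk3] at hk1 hl2
  have hz1 : z1 < hh a m (k+1) q := hk1.2.resolve_left (by omega)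
  have hz2 : hh a m l q < z2 := hl2.1.resolve_left (by omega)
  have hmono := hh_mono a m q
  have hlab : ∀ n, k < n → n < l → ¬ (i < n ∧ n < j) → w n = u ∨ w n = v := by
    intro n h1 h2 h3
    obtain ⟨z, hza, hzb⟩ := exists_between (hpos n h3)
    have e1 : hh a m (k+1) q ≤ hh a m n q := hmono (by omega : k + 1 ≤ n)
    have e2 : hh a m (n+1) q ≤ hh a m l q := hmono (by omega : n + 1 ≤ l)
    have hzU : mk3 q z ∈ U a m n := by
      rw [mem_U]; simp only [mk3_two, pr_mk3]; exact ⟨Or.inr hza, Or.inr hzb⟩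
    rcases hN z ⟨by linarith, by linarith⟩ with h | h
    · exact Or.inl (mem_EE_of_U (by omega) hzU h)
    · exact Or.inr (mem_EE_of_U (by omega) hzU h)
  have hl' : ¬ (i < l ∧ l < j) := by
    rintro ⟨h1, h2⟩
    have e := hpin l h1 h2
    rcases hl2.2 with h | h
    · omega
    · linarith
  have hk' : ¬ (i < k ∧ k < j) := by
    rintro ⟨h1, h2⟩
    have e := hpin k h1 h2
    have := hk1.1.resolve_left (by omega)
    linarith
  have ind : ∀ n, k ≤ n → n ≤ l → (¬ (i < n ∧ n < j) → w n = u) ∧ (i < n ∧ n < j → w j = u) := by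
    intro n hkn
    induction n, hkn using Nat.le_induction with
    | base => exact fun _ => ⟨fun _ => hku, fun h => absurd h hk'⟩
    | succ n hkn ih =>
      intro hnl
      obtain ⟨ih1, ih2⟩ := ih (by omega)
      refine ⟨fun h => ?_, fun h => ?_⟩
      · by_cases hn' : i < n ∧ n < j
        · have : n + 1 = j := by omega
          rw [this]; exact ih2 hn'
        · have hnu := ih1 hn'
          have hor : w (n+1) = u ∨ w (n+1) = v := by
            by_cases hnl' : n + 1 = l
            · right; rw [hnl', hlv]
            · exact hlab (n+1) (by omega) (by omega) h
          rcases hor with h' | h'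
          · exact h'
          · exfalso
            have := hwalk n
            rw [hnu, h'] at this
            rcases this with h'' | h''
            · exact huv h''
            · exact hn h''
      · by_cases hn' : i < n ∧ n < j
        · exact ih2 hn'
        · have : n = i := by omega
          rw [← hwij, ← this]; exact ih1 hn'
  have := (ind l hkl.le le_rfl).1 hl'
  exact huv (this.symm.trans hlv)

lemma column' {G : SimpleGraph V} (hwalk : ∀ k, w k = w (k+1) ∨ G.Adj (w k) (w (k+1)))
    (ha : ∀ k, a k ≤ k) (hw : ∀ k, w (a k) = w k) {u v : V} (huv : u ≠ v) (hn : ¬ G.Adj u v)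
    {N : Set E3} (hconv : Convex ℝ N) (hNs : N ⊆ XX a m w u ∪ XX a m w v)
    (q : ℝ × ℝ) {z1 z2 : ℝ} (h1 : mk3 q z1 ∈ N ∩ EE a m w u)
    (h2 : mk3 q z2 ∈ N ∩ EE a m w v) : False := by
  have hseg : ∀ s t : ℝ, mk3 q s ∈ N → mk3 q t ∈ N → ∀ z ∈ Set.Icc s t, mk3 q z ∈ N := by
    intro s t hs ht z hz
    have hst : s ≤ t := hz.1.trans hz.2
    rw [← segment_eq_Icc hst] at hz
    obtain ⟨α, β, h1, h2, h3, rfl⟩ := hz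
    have := hconv hs ht h1 h2 h3
    convert this using 1
    have hb : β = 1 - α := by linarith
    ext i
    fin_cases i <;> simp [mk3, hb] <;> ring
  obtain ⟨hN1, hE1⟩ := h1
  obtain ⟨hN2, hE2⟩ := h2
  obtain ⟨k, ⟨hk, hku⟩, hkU⟩ := mem_EE.1 hE1
  obtain ⟨l, ⟨hl, hlv⟩, hlU⟩ := mem_EE.1 hE2
  rcases lt_trichotomy k l with h | h | h
  · exact column hwalk ha hw huv hn q h hl hkU hlU hku hlv
      (fun z hz => hNs (hseg _ _ hN1 hN2 z hz))
  · subst h; exact huv (hku.symm.trans hlv)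
  · exact column hwalk ha hw huv.symm (fun h => hn h.symm) q h hk hlU hkU hlv hku
      (fun z hz => (hNs (hseg _ _ hN2 hN1 z hz)).symm)

lemma nonadj {G : SimpleGraph V} (hwalk : ∀ k, w k = w (k+1) ∨ G.Adj (w k) (w (k+1)))
    (ha : ∀ k, a k ≤ k) (hw : ∀ k, w (a k) = w k) {u v : V} (huv : u ≠ v) (hn : ¬ G.Adj u v) :
    interior (XX a m w u ∪ XX a m w v) ⊆ interior (XX a m w u) ∪ interior (XX a m w v) := by
  intro p hp
  obtain ⟨ε, hε, hball⟩ := Metric.isOpen_iff.1 isOpen_interior p hp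
  have hNs : Metric.ball p ε ⊆ XX a m w u ∪ XX a m w v := hball.trans interior_subset
  have hconv : Convex ℝ (Metric.ball p ε) := convex_ball p ε
  have hNo : IsOpen (Metric.ball p ε) := Metric.isOpen_ball
  have hpN : p ∈ Metric.ball p ε := Metric.mem_ball_self hε
  generalize Metric.ball p ε = N at *
  have hND : N ∩ DD a m ⊆ EE a m w u ∪ EE a m w v := by
    rintro q ⟨hq, hqD⟩
    obtain ⟨k, hk, hU⟩ := DD_U hqD
    rcases hNs hq with h | h
    · left; rw [← mem_EE_of_U hk hU h]; exact U_sub_EE hk hU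
    · right; rw [← mem_EE_of_U hk hU h]; exact U_sub_EE hk hU
  let P : V → Set E3 := fun x => ⋃ z : ℝ, (fun q : E3 => mk3 (pr q) z) ⁻¹' (N ∩ EE a m w x)
  have hPo : ∀ x, IsOpen (P x) := fun x =>
    isOpen_iUnion fun z => (hNo.inter (isOpen_EE x)).preimage (continuous_mk3_left z)
  have hPmem : ∀ x q, q ∈ P x ↔ ∃ z, mk3 (pr q) z ∈ N ∩ EE a m w x := by
    intro x q; simp [P]
  have hcov : N ⊆ P u ∪ P v := by
    intro q hq
    have ho : IsOpen ((fun z => mk3 (pr q) z) ⁻¹' N) := hNo.preimage (continuous_mk3_right _)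
    obtain ⟨z, hz1, hz2⟩ := (DD_vert (a := a) (m := m) (pr q)).inter_open_nonempty _ ho
      ⟨q 2, by simpa [mk3_pr] using hq⟩
    rcases hND ⟨hz1, hz2⟩ with h | h
    · left; exact (hPmem _ _).2 ⟨z, hz1, h⟩
    · right; exact (hPmem _ _).2 ⟨z, hz1, h⟩
  have hself : ∀ x, (N ∩ EE a m w x).Nonempty → (N ∩ P x).Nonempty := by
    rintro x ⟨q, hq⟩
    exact ⟨q, hq.1, (hPmem _ _).2 ⟨q 2, by rw [mk3_pr]; exact hq⟩⟩
  have hN' := subset_closure_DD (a := a) (m := m) hNo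
  by_cases h1 : (N ∩ EE a m w u).Nonempty
  · by_cases h2 : (N ∩ EE a m w v).Nonempty
    · exfalso
      obtain ⟨q, -, hq1, hq2⟩ := hconv.isPreconnected (P u) (P v) (hPo u) (hPo v) hcov
        (hself u h1) (hself v h2)
      obtain ⟨z1, hz1⟩ := (hPmem _ _).1 hq1
      obtain ⟨z2, hz2⟩ := (hPmem _ _).1 hq2
      exact column' hwalk ha hw huv hn hconv hNs (pr q) hz1 hz2
    · left
      refine interior_maximal (hN'.trans (closure_mono ?_)) hNo hpN
      intro q hq
      exact (hND hq).resolve_right (fun h => h2 ⟨q, hq.1, h⟩)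
  · right
    refine interior_maximal (hN'.trans (closure_mono ?_)) hNo hpN
    intro q hq
    exact (hND hq).resolve_left (fun h => h1 ⟨q, hq.1, h⟩)

end main
end NG


/-- Every finite connected simple graph is the neighbourhood graph of a connected
partition of `ℝ³` by regular closed polyhedra. -/
theorem connected_graph_is_neighbourhood_graph
    (V : Type) [Fintype V] (G : SimpleGraph V) (hG : G.Connected) :
    ∃ X : V → Set (Fin 3 → ℝ),
      (∀ v, IsPolyhedron3 (X v)) ∧
      (∀ v, X v = closure (interior (X v))) ∧
      (∀ v, (X v).Nonempty) ∧
      (∀ v, IsConnected (interior (X v))) ∧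
      (∀ u v, u ≠ v → interior (X u) ∩ interior (X v) = ∅) ∧
      (⋃ v, X v) = Set.univ ∧
      (∀ u v, u ≠ v → (IsConnected (interior (X u ∪ X v)) ↔ G.Adj u v)) := by
  classical
  obtain ⟨m, w, hm, hwalk, hsurj, hedge⟩ := NG.exists_walk G hG
  have hex : ∀ v, ∃ k, w k = v := fun v => (hsurj v).imp fun k hk => hk.2
  let r : V → ℕ := fun v => Nat.find (hex v)
  have hr : ∀ v, w (r v) = v := fun v => Nat.find_spec (hex v)
  have hrle : ∀ v k, w k = v → r v ≤ k := fun v k h => Nat.find_min' (hex v) h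
  have hrm : ∀ v, r v ≤ m := fun v => by
    obtain ⟨k, hk, h⟩ := hsurj v
    exact (hrle v k h).trans hk
  let a : ℕ → ℕ := fun k => r (w k)
  have ha : ∀ k, a k ≤ k := fun k => hrle _ k rfl
  have hw : ∀ k, w (a k) = w k := fun k => hr _
  have hconn : ∀ v, IsConnected (interior (NG.XX a m w v)) := fun v =>
    NG.XX_conn hm (hrm v) (hr v) (fun k hk => by simp only [a, hk]) (hrle v)
  refine ⟨NG.XX a m w, NG.poly_XX, NG.XX_reg, fun v => (hconn v).1.mono interior_subset, hconn,
    fun u v h => (NG.XX_disj h).inter_eq, NG.XX_union, fun u v huv => ⟨fun hc => ?_, fun h => ?_⟩⟩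
  · by_contra hn
    have hsub := NG.nonadj (m := m) hwalk ha hw huv hn
    obtain ⟨p, -, hp1, hp2⟩ := hc.2 _ _ isOpen_interior isOpen_interior hsub
      ((hconn u).1.mono fun p hp => ⟨interior_mono Set.subset_union_left hp, hp⟩)
      ((hconn v).1.mono fun p hp => ⟨interior_mono Set.subset_union_right hp, hp⟩)
    exact Set.disjoint_left.1 (NG.XX_disj huv) hp1 hp2
  · obtain ⟨k, hk, h1, h2⟩ := hedge u v h
    exact NG.adj_conn (hconn u) (hconn v) hk h1 h2
end

section
/- Let Γ be a Jordan curve in ℝ² and let χ be a Jordan arc whose endpoints lie on Γ and whose interior points avoid Γ (a chord of Γ). Then χ divides one of the two residual domains of Γ into exactly two subdomains. -/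
open Set Topology unitInterval

def HasLog (K : Set ℂ) (φ : ℂ → ℂ) : Prop :=
  ∃ h : ℂ → ℂ, ContinuousOn h K ∧ ∀ z ∈ K, Complex.exp (h z) = φ z

lemma lift_homotopy {X : Type*} [TopologicalSpace X] (H : I × X → ℂ) (hH : Continuous H)
    (h0 : ∀ x, H x ≠ 0) (l : X → ℂ) (hl : Continuous l)
    (hl0 : ∀ x, Complex.exp (l x) = H (0, x)) :
    ∃ k : X → ℂ, Continuous k ∧ ∀ x, Complex.exp (k x) = H (1, x) := by
  let H' : C(I × X, {z : ℂ // z ≠ 0}) := ⟨fun x => ⟨H x, h0 x⟩, by fun_prop⟩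
  let L := Complex.isCoveringMap_exp.liftHomotopy H' ⟨l, hl⟩
    (fun x => Subtype.ext (hl0 x).symm)
  have hL := Complex.isCoveringMap_exp.liftHomotopy_lifts H' ⟨l, hl⟩
    (fun x => Subtype.ext (hl0 x).symm)
  refine ⟨fun x => L (1, x), by fun_prop, fun x => ?_⟩
  exact congrArg Subtype.val (congrFun hL (1, x))

lemma hasLog_of_restrict {K : Set ℂ} {φ : ℂ → ℂ} (k : K → ℂ) (hk : Continuous k)
    (h : ∀ x : K, Complex.exp (k x) = φ x) : HasLog K φ := by
  classical
  refine ⟨fun z => if hz : z ∈ K then k ⟨z, hz⟩ else 0, ?_, ?_⟩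
  · rw [continuousOn_iff_continuous_domRestrict]
    convert hk using 1
    ext x
    simp
  · intro z hz
    simpa [hz] using h ⟨z, hz⟩

lemma hasLog_of_path {K : Set ℂ} (γ : I → ℂ) (hγ : Continuous γ) (hK : ∀ t, γ t ∉ K) :
    HasLog K (fun z => (z - γ 1) / (z - γ 0)) := by
  have hne : ∀ (x : K) (t : I), (x : ℂ) - γ t ≠ 0 := fun x t h => by
    apply hK t
    rw [← sub_eq_zero.1 h]; exact x.2
  obtain ⟨k, hk, hk1⟩ := lift_homotopy (X := K)
    (fun p => ((p.2 : ℂ) - γ p.1) / (p.2 - γ 0))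
    (by
      refine Continuous.div (by fun_prop) (by fun_prop) (fun p => hne _ _))
    (fun p => div_ne_zero (hne _ _) (hne _ _)) (fun _ => 0) continuous_const
    (fun x => by simp [div_self (hne x 0)])
  exact hasLog_of_restrict k hk hk1

/-- arcs carry logs -/
lemma hasLog_arc (α : I → ℂ) (hα : Continuous α) (hi : Function.Injective α) (φ : ℂ → ℂ)
    (hφ : ContinuousOn φ (range α)) (h0 : ∀ z ∈ range α, φ z ≠ 0) : HasLog (range α) φ := by
  have he := hα.isClosedEmbedding hi
  let e : I ≃ₜ range α := he.isEmbedding.toHomeomorph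
  have hφ' : Continuous (fun t : I => φ (α t)) :=
    hφ.comp_continuous hα (fun t => mem_range_self t)
  obtain ⟨k, hk, hk1⟩ := lift_homotopy (X := I)
    (fun p => φ (α (p.1 * p.2))) (hφ'.comp (continuous_fst.mul continuous_snd)) (fun p => h0 _ (mem_range_self _))
    (fun _ => Complex.log (φ (α 0))) continuous_const
    (fun x => by simp [Complex.exp_log (h0 _ (mem_range_self 0))])
  refine hasLog_of_restrict (fun x => k (e.symm x)) (by fun_prop) (fun x => ?_)
  rw [hk1]
  have : α (e.symm x) = x := congrArg Subtype.val (e.apply_symm_apply x)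
  simp [this]

lemma log_unique {S : Set ℂ} (hS : IsPreconnected S) {h₁ h₂ : ℂ → ℂ} (c₁ : ContinuousOn h₁ S)
    (c₂ : ContinuousOn h₂ S) (h : ∀ z ∈ S, Complex.exp (h₁ z) = Complex.exp (h₂ z)) :
    ∃ c, Complex.exp c = 1 ∧ ∀ z ∈ S, h₁ z = h₂ z + c := by
  rcases S.eq_empty_or_nonempty with rfl | ⟨a, ha⟩
  · exact ⟨0, by simp, by simp⟩
  have hc : Complex.exp (h₁ a - h₂ a) = 1 := by
    rw [Complex.exp_sub, h a ha, div_self (Complex.exp_ne_zero _)]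
  refine ⟨h₁ a - h₂ a, hc, ?_⟩
  refine Complex.isCoveringMap_exp.eqOn_of_comp_eqOn hS c₁ (c₂.add continuousOn_const) ?_ ha
    (by simp)
  intro z hz
  apply Subtype.ext
  simp only [Function.comp]
  rw [Complex.exp_add, hc, mul_one, h z hz]

lemma key_degree {U K : Set ℂ} (hU : Bornology.IsBounded U) (hK : IsClosed K)
    (hUo : IsOpen U) (hf : frontier U ⊆ K) {a : ℂ} (ha : a ∈ U) {h G : ℂ → ℂ} (hh : ContinuousOn h K)
    (hG : ContinuousOn G (closure U)) (hG0 : ∀ z ∈ closure U, G z ≠ 0) (n : ℤ)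
    (he : ∀ z ∈ K, (z - a) ^ n = G z * Complex.exp (h z)) : n = 0 := by
  classical
  replace ha : a ∈ interior (closure U) := interior_maximal subset_closure hUo ha
  replace hf : frontier (closure U) ⊆ K := frontier_closure_subset.trans hf
  obtain ⟨H, hH⟩ := ContinuousMap.exists_restrict_eq hK ⟨K.domRestrict h, hh.domRestrict⟩
  have hH : ∀ z ∈ K, H z = h z := fun z hz => congrArg (fun f => f ⟨z, hz⟩) hH
  have hne : ∀ z, z ∉ interior (closure U) → z - a ≠ 0 := fun z hz h => by
    rw [sub_eq_zero.1 h] at hz; exact hz ha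
  let F : ℂ → ℂ := fun z => if z ∈ closure U then G z * Complex.exp (H z) else (z - a) ^ n
  have hF : Continuous F := by
    refine continuous_if ?_ ?_ ?_
    · intro z hz
      have hz : z ∈ K := hf hz
      rw [he z hz, hH z hz]
    · change ContinuousOn _ (closure (closure U))
      rw [closure_closure]
      exact hG.mul (by fun_prop)
    · change ContinuousOn _ (closure (closure U)ᶜ)
      rw [closure_compl]
      exact ContinuousOn.zpow₀ (by fun_prop) n (fun z hz => Or.inl (hne z hz))
  have hF0 : ∀ z, F z ≠ 0 := by
    intro z
    by_cases hz : z ∈ closure U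
    · simp [F, hz, hG0 z hz]
    · simp only [F, hz, if_false]
      exact zpow_ne_zero _ (hne z (fun h => hz (interior_subset h)))
  obtain ⟨k, hk, hk1⟩ := lift_homotopy (X := ℂ) (fun p => F (a + (p.1 : ℝ) * p.2)) (by fun_prop)
    (fun p => hF0 _) (fun _ => Complex.log (F a)) continuous_const
    (fun x => by simp [Complex.exp_log (hF0 a)])
  obtain ⟨R, hR⟩ := hU.closure.subset_ball_lt 0 a
  obtain ⟨hR0, hR⟩ := hR
  have hk2 : ∀ θ : ℝ, Complex.exp (k (R * Complex.exp (θ * Complex.I)))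
      = Complex.exp (n * (Real.log R + θ * Complex.I)) := by
    intro θ
    rw [hk1]
    have : a + R * Complex.exp (θ * Complex.I) ∉ closure U := fun h => by
      have := hR h
      simp [abs_of_pos hR0, Complex.norm_exp_ofReal_mul_I] at this
    simp only [F, Icc.coe_one, Complex.ofReal_one, one_mul, this, if_false]
    rw [Complex.exp_int_mul, Complex.exp_add, ← Complex.ofReal_exp, Real.exp_log hR0]
    simp
  obtain ⟨c, -, hc⟩ := log_unique (S := range (fun t : ℝ => (t : ℂ)))
    (isPreconnected_range Complex.continuous_ofReal)
    (h₁ := fun t => k (R * Complex.exp (t * Complex.I)))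
    (h₂ := fun t => n * (Real.log R + t * Complex.I))
    (by fun_prop) (by fun_prop) (by rintro _ ⟨t, rfl⟩; exact hk2 t)
  have e0 := hc ((0:ℝ) : ℂ) ⟨_, rfl⟩
  have e1 := hc ((2 * Real.pi : ℝ) : ℂ) ⟨_, rfl⟩
  have : Complex.exp (((2 * Real.pi : ℝ) : ℂ) * Complex.I) = 1 := by
    push_cast; exact Complex.exp_two_pi_mul_I
  simp only [this] at e1
  simp at e0 e1
  rw [e0] at e1
  have : (n : ℂ) * (2 * Real.pi * Complex.I) = 0 := by linear_combination -e1
  simpa [Real.pi_ne_zero] using this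


lemma glue_closed {A B : Set ℂ} (hA : IsClosed A) (hB : IsClosed B) {h₁ h₂ : ℂ → ℂ}
    (c₁ : ContinuousOn h₁ A) (c₂ : ContinuousOn h₂ B) (h : ∀ z ∈ A, z ∈ B → h₁ z = h₂ z) :
    ∃ k : ℂ → ℂ, ContinuousOn k (A ∪ B) ∧ (∀ z ∈ A, k z = h₁ z) ∧ ∀ z ∈ B, k z = h₂ z := by
  classical
  have e1 : ∀ z ∈ A, A.piecewise h₁ h₂ z = h₁ z := fun z hz => by simp [hz]
  have e2 : ∀ z ∈ B, A.piecewise h₁ h₂ z = h₂ z := fun z hz => by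
    by_cases hz' : z ∈ A
    · simp [hz', h z hz' hz]
    · simp [hz']
  exact ⟨A.piecewise h₁ h₂, (c₁.congr e1).union_of_isClosed (c₂.congr e2) hA hB, e1, e2⟩

lemma glue_open {A B : Set ℂ} (hA : IsOpen A) (hB : IsOpen B) {h₁ h₂ : ℂ → ℂ}
    (c₁ : ContinuousOn h₁ A) (c₂ : ContinuousOn h₂ B) (h : ∀ z ∈ A, z ∈ B → h₁ z = h₂ z) :
    ∃ k : ℂ → ℂ, ContinuousOn k (A ∪ B) ∧ (∀ z ∈ A, k z = h₁ z) ∧ ∀ z ∈ B, k z = h₂ z := by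
  classical
  have e1 : ∀ z ∈ A, A.piecewise h₁ h₂ z = h₁ z := fun z hz => by simp [hz]
  have e2 : ∀ z ∈ B, A.piecewise h₁ h₂ z = h₂ z := fun z hz => by
    by_cases hz' : z ∈ A
    · simp [hz', h z hz' hz]
    · simp [hz']
  exact ⟨A.piecewise h₁ h₂, (c₁.congr e1).union_of_isOpen (c₂.congr e2) hA hB, e1, e2⟩

lemma frontier_comp {K : Set ℂ} (hK : IsClosed K) (a : ℂ) :
    frontier (connectedComponentIn Kᶜ a) ⊆ K := by
  intro x hx
  by_contra hxK
  have ho : IsOpen (connectedComponentIn Kᶜ a) := hK.isOpen_compl.connectedComponentIn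
  rw [ho.frontier_eq] at hx
  have hox : IsOpen (connectedComponentIn Kᶜ x) := hK.isOpen_compl.connectedComponentIn
  have hm : x ∈ connectedComponentIn Kᶜ x := mem_connectedComponentIn hxK
  obtain ⟨y, hy1, hy2⟩ := mem_closure_iff.1 hx.1 _ hox hm
  have e1 := connectedComponentIn_eq hy1
  have e2 := connectedComponentIn_eq hy2
  rw [e2, ← e1] at hx
  exact hx.2 hm

lemma compl_ball_conn (R : ℝ) (hR : 0 ≤ R) : IsPreconnected (Metric.closedBall (0:ℂ) R)ᶜ := by
  have : (Metric.closedBall (0:ℂ) R)ᶜ =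
      (fun p : ℝ × ℝ => (p.1 : ℂ) * Complex.exp (p.2 * Complex.I)) '' (Ioi R ×ˢ univ) := by
    ext z
    constructor
    · intro hz
      refine ⟨(‖z‖, z.arg), ⟨?_, mem_univ _⟩, Complex.norm_mul_exp_arg_mul_I z⟩
      simpa using hz
    · rintro ⟨⟨r, θ⟩, ⟨hr, -⟩, rfl⟩
      have hr : R < r := hr
      simp [Complex.norm_exp_ofReal_mul_I, abs_of_pos (hR.trans_lt hr), hr]
  rw [this]
  refine (isPreconnected_Ioi.prod isPreconnected_univ).image _ (by fun_prop)

lemma bounded_or {K : Set ℂ} (hK : IsCompact K) {a b : ℂ}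
    (hab : connectedComponentIn Kᶜ a ≠ connectedComponentIn Kᶜ b) :
    Bornology.IsBounded (connectedComponentIn Kᶜ a) ∨
      Bornology.IsBounded (connectedComponentIn Kᶜ b) := by
  obtain ⟨R, hR0, hR⟩ := hK.isBounded.subset_closedBall_lt 0 0
  by_contra! hcon
  apply hab
  have key : ∀ c, ¬ Bornology.IsBounded (connectedComponentIn Kᶜ c) →
      (Metric.closedBall (0:ℂ) R)ᶜ ⊆ connectedComponentIn Kᶜ c := by
    intro c hc
    have : ∃ y ∈ connectedComponentIn Kᶜ c, y ∈ (Metric.closedBall (0:ℂ) R)ᶜ := by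
      by_contra! h
      exact hc (Metric.isBounded_closedBall.subset (fun y hy => not_not.1 (h y hy)))
    obtain ⟨y, hy1, hy2⟩ := this
    rw [connectedComponentIn_eq hy1]
    exact (compl_ball_conn R hR0.le).subset_connectedComponentIn hy2 (compl_subset_compl.2 hR)
  have hn : ((R + 1 : ℝ) : ℂ) ∈ (Metric.closedBall (0:ℂ) R)ᶜ := by
    simp only [mem_compl_iff, Metric.mem_closedBall, dist_zero_right, Complex.norm_real,
      Real.norm_eq_abs, abs_of_pos (show 0 < R + 1 by linarith)]
    linarith
  rw [connectedComponentIn_eq (key a hcon.1 hn), connectedComponentIn_eq (key b hcon.2 hn)]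

lemma not_mem_closure_comp {K : Set ℂ} (hK : IsClosed K) {a b : ℂ} (hb : b ∉ K)
    (hab : connectedComponentIn Kᶜ a ≠ connectedComponentIn Kᶜ b) :
    b ∉ closure (connectedComponentIn Kᶜ a) := by
  intro h
  have hb' : b ∉ connectedComponentIn Kᶜ a := fun h => hab (connectedComponentIn_eq h)
  apply hb
  apply frontier_comp hK a
  rw [(hK.isOpen_compl.connectedComponentIn).frontier_eq]
  exact ⟨h, hb'⟩

/-- degree lemma for bounded components -/
lemma comp_degree {K : Set ℂ} (hK : IsClosed K) {a b : ℂ} (ha : a ∉ K) (hb : b ∉ K)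
    (hbd : Bornology.IsBounded (connectedComponentIn Kᶜ a))
    (hab : connectedComponentIn Kᶜ a ≠ connectedComponentIn Kᶜ b) (n m : ℤ)
    (h : HasLog K (fun z => (z - a) ^ n * (z - b) ^ m)) : n = 0 := by
  obtain ⟨l, hl, hl1⟩ := h
  have hne : ∀ z ∈ closure (connectedComponentIn Kᶜ a), z - b ≠ 0 := fun z hz h0 => by
    rw [sub_eq_zero.1 h0] at hz
    exact not_mem_closure_comp hK hb hab hz
  refine key_degree hbd hK hK.isOpen_compl.connectedComponentIn (frontier_comp hK a)
    (mem_connectedComponentIn ha) hl (G := fun z => (z - b) ^ (-m)) ?_ ?_ n ?_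
  · exact ContinuousOn.zpow₀ (by fun_prop) _ (fun z hz => Or.inl (hne z hz))
  · exact fun z hz => zpow_ne_zero _ (hne z hz)
  · intro z hz
    have : z - b ≠ 0 := fun h0 => hb (by rw [← sub_eq_zero.1 h0]; exact hz)
    rw [hl1 z hz, zpow_neg]
    field_simp

lemma HasLog.symm {K : Set ℂ} {a b : ℂ} (h : HasLog K (fun z => (z - a) / (z - b))) :
    HasLog K (fun z => (z - b) / (z - a)) := by
  obtain ⟨l, hl, h1⟩ := h
  refine ⟨fun z => - l z, hl.neg, fun z hz => ?_⟩
  rw [Complex.exp_neg, h1 z hz, inv_div]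

lemma same_comp_of_hasLog {K : Set ℂ} (hK : IsCompact K) {a b : ℂ} (ha : a ∉ K) (hb : b ∉ K)
    (h : HasLog K (fun z => (z - a) / (z - b))) :
    connectedComponentIn Kᶜ a = connectedComponentIn Kᶜ b := by
  by_contra hab
  rcases bounded_or hK hab with hbd | hbd
  · have := comp_degree hK.isClosed ha hb hbd hab 1 (-1) (by simpa [div_eq_mul_inv] using h)
    simp at this
  · have := comp_degree hK.isClosed hb ha hbd (Ne.symm hab) 1 (-1)
      (by simpa [div_eq_mul_inv] using h.symm)
    simp at this

lemma hasLog_of_same_comp {K : Set ℂ} (hK : IsClosed K) {a b : ℂ} (ha : a ∉ K) (hb : b ∉ K)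
    (h : connectedComponentIn Kᶜ a = connectedComponentIn Kᶜ b) :
    HasLog K (fun z => (z - a) / (z - b)) := by
  have ho : IsOpen (connectedComponentIn Kᶜ b) := hK.isOpen_compl.connectedComponentIn
  have hbm : b ∈ connectedComponentIn Kᶜ b := mem_connectedComponentIn hb
  have ham : a ∈ connectedComponentIn Kᶜ b := h ▸ mem_connectedComponentIn ha
  have hp := ho.isConnected_iff_isPathConnected.1 (isConnected_connectedComponentIn_iff.2 hb)
  obtain ⟨γ, hγ⟩ := hp.joinedIn b hbm a ham
  have := hasLog_of_path (K := K) γ γ.continuous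
    (fun t => connectedComponentIn_subset _ _ (hγ t))
  simpa using this

lemma janiszewski {A B : Set ℂ} (hA : IsCompact A) (hB : IsCompact B)
    (hAB : IsPreconnected (A ∩ B)) {a b : ℂ} (ha : a ∉ A ∪ B) (hb : b ∉ A ∪ B)
    (h1 : connectedComponentIn Aᶜ a = connectedComponentIn Aᶜ b)
    (h2 : connectedComponentIn Bᶜ a = connectedComponentIn Bᶜ b) :
    connectedComponentIn (A ∪ B)ᶜ a = connectedComponentIn (A ∪ B)ᶜ b := by
  apply same_comp_of_hasLog (hA.union hB) ha hb
  simp only [mem_union, not_or] at ha hb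
  obtain ⟨l, hl, hl1⟩ := hasLog_of_same_comp hA.isClosed ha.1 hb.1 h1
  obtain ⟨k, hk, hk1⟩ := hasLog_of_same_comp hB.isClosed ha.2 hb.2 h2
  obtain ⟨c, hc, hc1⟩ := log_unique hAB (hl.mono inter_subset_left) (hk.mono inter_subset_right)
    (fun z hz => by rw [hl1 z hz.1, hk1 z hz.2])
  obtain ⟨g, hg, g1, g2⟩ := glue_closed hA.isClosed hB.isClosed hl
    (hk.add (continuousOn_const (c := c))) (fun z hz hz' => hc1 z ⟨hz, hz'⟩)
  refine ⟨g, hg, ?_⟩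
  rintro z (hz | hz)
  · rw [g1 z hz, hl1 z hz]
  · rw [g2 z hz, Pi.add_apply, Complex.exp_add, hc, mul_one, hk1 z hz]

lemma arc_compl {α : I → ℂ} (hα : Continuous α) (hi : Function.Injective α) :
    IsPreconnected (range α)ᶜ := by
  have hK := isCompact_range hα
  have key : ∀ a ∉ range α, ∀ b ∉ range α,
      connectedComponentIn (range α)ᶜ a = connectedComponentIn (range α)ᶜ b := by
    intro a ha b hb
    have hn : ∀ c ∉ range α, ∀ z ∈ range α, z - c ≠ 0 := fun c hc z hz h => hc (by
      rw [← sub_eq_zero.1 h]; exact hz)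
    refine same_comp_of_hasLog hK ha hb (hasLog_arc α hα hi _ ?_ ?_)
    · exact ContinuousOn.div (by fun_prop) (by fun_prop) (hn b hb)
    · exact fun z hz => div_ne_zero (hn a ha z hz) (hn b hb z hz)
  apply isPreconnected_of_forall_pair
  intro a ha b hb
  exact ⟨connectedComponentIn (range α)ᶜ a, connectedComponentIn_subset _ _,
    mem_connectedComponentIn ha, key a ha b hb ▸ mem_connectedComponentIn hb,
    isPreconnected_connectedComponentIn⟩

/-- lower bound -/
lemma jordan_sep {α β : I → ℂ} (hα : Continuous α) (hβ : Continuous β)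
    (h0 : α 0 = β 0) (h1 : α 1 = β 1) (hne : α 0 ≠ α 1)
    (hab : ∀ z ∈ range α, z ∈ range β → z = α 0 ∨ z = α 1) :
    ¬ IsPreconnected (range α ∪ range β)ᶜ := by
  intro hJ
  have hA : IsOpen (range α)ᶜ := (isCompact_range hα).isClosed.isOpen_compl
  have hB : IsOpen (range β)ᶜ := (isCompact_range hβ).isClosed.isOpen_compl
  obtain ⟨l, hl, hl1⟩ := hasLog_of_path (K := (range α)ᶜ) (fun t => α (σ t)) (by fun_prop)
    (fun t => by simp)
  obtain ⟨k, hk, hk1⟩ := hasLog_of_path (K := (range β)ᶜ) (fun t => β (σ t)) (by fun_prop)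
    (fun t => by simp)
  simp only [symm_one, symm_zero, ← h0, ← h1] at hl1 hk1
  rw [compl_union] at hJ
  obtain ⟨c, hc, hc1⟩ := log_unique hJ (hl.mono inter_subset_left) (hk.mono inter_subset_right)
    (fun z hz => by rw [hl1 z hz.1, hk1 z hz.2])
  obtain ⟨g, hg, g1, g2⟩ := glue_open hA hB hl
    (hk.add (continuousOn_const (c := c))) (fun z hz hz' => hc1 z ⟨hz, hz'⟩)
  have hg3 : ∀ z ∈ (range α)ᶜ ∪ (range β)ᶜ, Complex.exp (g z) = (z - α 0) / (z - α 1) := by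
    rintro z (hz | hz)
    · rw [g1 z hz, hl1 z hz]
    · rw [g2 z hz, Pi.add_apply, Complex.exp_add, hc, mul_one, hk1 z hz]
  set p := α 0
  set q := α 1
  set r := dist q p / 2 with hrd
  have hd : 0 < dist q p := dist_pos.2 hne.symm
  have hr : 0 < r := by positivity
  have hsub : Metric.sphere p r ⊆ (range α)ᶜ ∪ (range β)ᶜ := by
    intro z hz
    by_contra hcon
    simp only [mem_union, mem_compl_iff, not_or, not_not] at hcon
    have hz : dist z p = r := hz
    rcases hab z hcon.1 hcon.2 with rfl | rfl
    · rw [dist_self] at hz; linarith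
    · linarith
  have hzq : ∀ z ∈ Metric.closedBall p r, z - q ≠ 0 := by
    intro z hz h
    rw [sub_eq_zero.1 h] at hz
    have hz : dist q p ≤ r := hz
    linarith
  have hcl : closure (Metric.ball p r) = Metric.closedBall p r := closure_ball p hr.ne'
  have := key_degree (U := Metric.ball p r) (K := Metric.sphere p r) Metric.isBounded_ball
    Metric.isClosed_sphere Metric.isOpen_ball (frontier_ball p hr.ne').subset
    (Metric.mem_ball_self hr) (hg.mono hsub) (G := fun z => z - q) (by fun_prop)
    (by rw [hcl]; exact hzq) 1 (by
      intro z hz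
      have := hzq z (Metric.sphere_subset_closedBall hz)
      rw [hg3 z (hsub hz)]
      field_simp)
  simp at this

/-- upper bound -/
lemma exp_int_diff {a b : ℂ} (h : Complex.exp a = Complex.exp b) :
    ∃ m : ℤ, a = b + m * (2 * Real.pi * Complex.I) := Complex.exp_eq_exp_iff_exists_int.1 h

lemma arcs_log {α β : I → ℂ} (hα : Continuous α) (hβ : Continuous β)
    (iα : Function.Injective α) (iβ : Function.Injective β)
    (h0 : α 0 = β 0) (h1 : α 1 = β 1) (φ : ℂ → ℂ)
    (hφ : ContinuousOn φ (range α ∪ range β)) (hn : ∀ z ∈ range α ∪ range β, φ z ≠ 0) :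
    ∃ (l k : ℂ → ℂ) (m : ℤ), ContinuousOn l (range α) ∧ ContinuousOn k (range β) ∧
      (∀ z ∈ range α, Complex.exp (l z) = φ z) ∧ (∀ z ∈ range β, Complex.exp (k z) = φ z) ∧
      l (α 0) = k (α 0) ∧ l (α 1) = k (α 1) + m * (2 * Real.pi * Complex.I) := by
  obtain ⟨l, hl, hl1⟩ := hasLog_arc α hα iα φ (hφ.mono subset_union_left)
    (fun z hz => hn z (Or.inl hz))
  obtain ⟨k, hk, hk1⟩ := hasLog_arc β hβ iβ φ (hφ.mono subset_union_right)
    (fun z hz => hn z (Or.inr hz))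
  obtain ⟨j, hj⟩ := exp_int_diff ((hl1 (α 0) ⟨0, rfl⟩).trans (hk1 (α 0) ⟨0, h0.symm⟩).symm)
  obtain ⟨m, hm⟩ := exp_int_diff ((hl1 (α 1) ⟨1, rfl⟩).trans (hk1 (α 1) ⟨1, h1.symm⟩).symm)
  refine ⟨l, fun z => k z + j * (2 * Real.pi * Complex.I), m - j, hl, hk.add continuousOn_const,
    hl1, ?_, hj, ?_⟩
  · intro z hz
    rw [Complex.exp_add, hk1 z hz, Complex.exp_int_mul_two_pi_mul_I, mul_one]
  · rw [hm]; push_cast; ring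

lemma jordan_upper {α β : I → ℂ} (hα : Continuous α) (hβ : Continuous β)
    (iα : Function.Injective α) (iβ : Function.Injective β)
    (h0 : α 0 = β 0) (h1 : α 1 = β 1)
    (hab : ∀ z ∈ range α, z ∈ range β → z = α 0 ∨ z = α 1) {a b : ℂ}
    (ha : a ∉ range α ∪ range β) (hb : b ∉ range α ∪ range β)
    (ba : Bornology.IsBounded (connectedComponentIn (range α ∪ range β)ᶜ a))
    (bb : Bornology.IsBounded (connectedComponentIn (range α ∪ range β)ᶜ b)) :
    connectedComponentIn (range α ∪ range β)ᶜ a = connectedComponentIn (range α ∪ range β)ᶜ b := by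
  by_contra hne
  have hK := ((isCompact_range hα).union (isCompact_range hβ)).isClosed
  have hz : ∀ c ∉ range α ∪ range β, ∀ z ∈ range α ∪ range β, z - c ≠ 0 := fun c hc z hz h => hc (by
      rw [← sub_eq_zero.1 h]; exact hz)
  obtain ⟨l, k, m, hl, hk, hl1, hk1, e0, e1⟩ := arcs_log hα hβ iα iβ h0 h1 (fun z => z - a)
    (by fun_prop) (hz a ha)
  obtain ⟨l', k', m', hl', hk', hl1', hk1', e0', e1'⟩ :=
    arcs_log hα hβ iα iβ h0 h1 (fun z => z - b) (by fun_prop) (hz b hb)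
  have main : ∀ n n' : ℤ, n * m + n' * m' = 0 → n = 0 ∧ n' = 0 := by
    intro n n' hnn
    obtain ⟨g, hg, g1, g2⟩ := glue_closed (isCompact_range hα).isClosed (isCompact_range hβ).isClosed
      (h₁ := fun z => n * l z + n' * l' z) (h₂ := fun z => n * k z + n' * k' z)
      (by fun_prop) (by fun_prop) (by
        intro z hz hz'
        have hnn : (n * m + n' * m' : ℂ) = 0 := by exact_mod_cast hnn
        rcases hab z hz hz' with rfl | rfl
        · rw [e0, e0']
        · rw [e1, e1']
          linear_combination (2 * Real.pi * Complex.I) * hnn)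
    have hlog : HasLog (range α ∪ range β) (fun z => (z - a) ^ n * (z - b) ^ n') := by
      refine ⟨g, hg, ?_⟩
      rintro z (hz | hz)
      · rw [g1 z hz, Complex.exp_add, Complex.exp_int_mul, Complex.exp_int_mul, hl1 z hz, hl1' z hz]
      · rw [g2 z hz, Complex.exp_add, Complex.exp_int_mul, Complex.exp_int_mul, hk1 z hz, hk1' z hz]
    refine ⟨comp_degree hK ha hb ba hne n n' hlog, comp_degree hK hb ha bb (Ne.symm hne) n' n ?_⟩
    simpa [mul_comm] using hlog
  obtain ⟨hm', hm⟩ := main m' (-m) (by ring)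
  have := main 1 0 (by simp_all)
  simp at this


lemma main_C (Γ : Set ℂ) (hΓ : IsCompact Γ) (α g : I → ℂ) (hα : Continuous α)
    (iα : Function.Injective α) (hαΓ : range α ⊆ Γ) (hg : Continuous g)
    (ig : Function.Injective g) (h0 : α 0 = g 0) (h1 : α 1 = g 1)
    (hgΓ : ∀ t : I, t ≠ 0 → t ≠ 1 → g t ∉ Γ) :
    ∃ y₀ ∉ Γ,
      range g \ Γ ⊆ connectedComponentIn Γᶜ y₀ ∧
      ∃ V₁ V₂ : Set ℂ, V₁ ≠ V₂ ∧
        (∃ y₁ ∈ connectedComponentIn Γᶜ y₀ \ range g,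
          V₁ = connectedComponentIn (connectedComponentIn Γᶜ y₀ \ range g) y₁) ∧
        (∃ y₂ ∈ connectedComponentIn Γᶜ y₀ \ range g,
          V₂ = connectedComponentIn (connectedComponentIn Γᶜ y₀ \ range g) y₂) ∧
        ∀ y ∈ connectedComponentIn Γᶜ y₀ \ range g,
          connectedComponentIn (connectedComponentIn Γᶜ y₀ \ range g) y = V₁ ∨
          connectedComponentIn (connectedComponentIn Γᶜ y₀ \ range g) y = V₂ := by
  have h01 : α 0 ≠ α 1 := fun h => zero_ne_one (iα h)
  have hmeet : ∀ z ∈ Γ, z ∈ range g → z = α 0 ∨ z = α 1 := by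
    rintro _ hz ⟨t, rfl⟩
    by_contra! hcon
    exact hgΓ t (fun h => hcon.1 (by rw [h, h0])) (fun h => hcon.2 (by rw [h, h1])) hz
  have hab : ∀ z ∈ range α, z ∈ range g → z = α 0 ∨ z = α 1 := fun z hz => hmeet z (hαΓ hz)
  have hJc : IsCompact (range α ∪ range g) := (isCompact_range hα).union (isCompact_range hg)
  have hint : Γ ∩ (range α ∪ range g) = range α := by
    ext z
    constructor
    · rintro ⟨hz, hz' | hz'⟩
      · exact hz'
      · rcases hmeet z hz hz' with rfl | rfl
        · exact ⟨0, rfl⟩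
        · exact ⟨1, rfl⟩
    · exact fun hz => ⟨hαΓ hz, Or.inl hz⟩
  let half : I := ⟨1 / 2, by norm_num, by norm_num⟩
  have hh0 : half ≠ 0 := fun h => by
    have := congrArg Subtype.val h; norm_num [half] at this
  have hh1 : half ≠ 1 := fun h => by
    have := congrArg Subtype.val h; norm_num [half] at this
  have hy0 : g half ∉ Γ := hgΓ half hh0 hh1
  have hsub : range g \ Γ ⊆ connectedComponentIn Γᶜ (g half) := by
    have hpre : IsPreconnected (g '' Ioo 0 1) := isPreconnected_Ioo.image _ hg.continuousOn
    have hc : g '' Ioo 0 1 ⊆ connectedComponentIn Γᶜ (g half) := by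
      apply hpre.subset_connectedComponentIn
      · exact ⟨half, ⟨lt_of_le_of_ne half.2.1 hh0.symm, lt_of_le_of_ne half.2.2 hh1⟩, rfl⟩
      · rintro _ ⟨t, ht, rfl⟩
        exact hgΓ t ht.1.ne' ht.2.ne
    refine Subset.trans ?_ hc
    rintro _ ⟨⟨t, rfl⟩, ht⟩
    refine ⟨t, ⟨lt_of_le_of_ne t.2.1 ?_, lt_of_le_of_ne t.2.2 ?_⟩, rfl⟩
    · rintro rfl
      exact ht (h0 ▸ hαΓ ⟨0, rfl⟩)
    · rintro rfl
      exact ht (h1 ▸ hαΓ ⟨1, rfl⟩)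
  refine ⟨g half, hy0, hsub, ?_⟩
  set U := connectedComponentIn Γᶜ (g half) with hU
  have hUΓ : U ⊆ Γᶜ := connectedComponentIn_subset _ _
  have hUo : IsOpen U := hΓ.isClosed.isOpen_compl.connectedComponentIn
  have hUJ : ∀ y ∈ U \ range g, y ∉ Γ ∪ (range α ∪ range g) := by
    rintro y ⟨hy, hy'⟩ (h | h | h)
    · exact hUΓ hy h
    · exact hUΓ hy (hαΓ h)
    · exact hy' h
  have hUc : ∀ y ∈ U, connectedComponentIn Γᶜ y = U := fun y hy => (connectedComponentIn_eq hy).symm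
  have hcomp : ∀ y ∈ U \ range g, connectedComponentIn (U \ range g) y =
      connectedComponentIn (Γ ∪ (range α ∪ range g))ᶜ y := by
    intro y hy
    apply Subset.antisymm
    · exact connectedComponentIn_mono y (fun z hz => hUJ z hz)
    · apply isPreconnected_connectedComponentIn.subset_connectedComponentIn
        (mem_connectedComponentIn (hUJ y hy))
      intro z hz
      refine ⟨?_, fun h => connectedComponentIn_subset _ _ hz (Or.inr (Or.inr h))⟩
      rw [← hUc y hy.1]
      exact connectedComponentIn_mono y (compl_subset_compl.2 subset_union_left) hz
  have claim1 : ∀ y ∈ U \ range g, ∀ y' ∈ U \ range g,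
      connectedComponentIn (range α ∪ range g)ᶜ y = connectedComponentIn (range α ∪ range g)ᶜ y' →
      connectedComponentIn (U \ range g) y = connectedComponentIn (U \ range g) y' := by
    intro y hy y' hy' h
    rw [hcomp y hy, hcomp y' hy']
    apply janiszewski hΓ hJc ?_ (hUJ y hy) (hUJ y' hy') ?_ h
    · rw [hint]; exact isPreconnected_range hα
    · rw [hUc y hy.1, hUc y' hy'.1]
  have claim2 : ∀ y ∈ U \ range g, ∀ y' ∈ U \ range g,
      connectedComponentIn (U \ range g) y = connectedComponentIn (U \ range g) y' →
      connectedComponentIn (range α ∪ range g)ᶜ y =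
        connectedComponentIn (range α ∪ range g)ᶜ y' := by
    intro y hy y' hy' h
    rw [hcomp y hy, hcomp y' hy'] at h
    apply connectedComponentIn_eq
    apply connectedComponentIn_mono y (compl_subset_compl.2 subset_union_right)
    rw [h]
    exact mem_connectedComponentIn (hUJ y' hy')
  have claim3 : ∀ a ∉ range α ∪ range g, ∃ y ∈ U \ range g,
      connectedComponentIn (range α ∪ range g)ᶜ y =
        connectedComponentIn (range α ∪ range g)ᶜ a := by
    intro a ha
    set V := connectedComponentIn (range α ∪ range g)ᶜ a with hV
    have hVJ : V ⊆ (range α ∪ range g)ᶜ := connectedComponentIn_subset _ _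
    have hVo : IsOpen V := hJc.isClosed.isOpen_compl.connectedComponentIn
    by_cases hne : (U ∩ V).Nonempty
    · obtain ⟨y, hy, hyV⟩ := hne
      exact ⟨y, ⟨hy, fun h => hVJ hyV (Or.inr h)⟩, (connectedComponentIn_eq hyV).symm⟩
    exfalso
    have hdisj : Disjoint U (closure V) :=
      (disjoint_iff_inter_eq_empty.2 (not_nonempty_iff_eq_empty.1 hne)).closure_right hUo
    have hcl : closure V ∩ (range α)ᶜ ⊆ V := by
      rintro z ⟨hz, hzα⟩
      by_contra hzV
      have hzf : z ∈ frontier V := by rw [hVo.frontier_eq]; exact ⟨hz, hzV⟩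
      rcases frontier_comp hJc.isClosed a hzf with h | h
      · exact hzα h
      · have hzU : z ∈ U := hsub ⟨h, fun h' => by
          apply hzα
          rw [← hint]; exact ⟨h', Or.inr h⟩⟩
        exact disjoint_left.1 hdisj hzU hz
    have hpre := arc_compl hα iα
    have haA : a ∈ (range α)ᶜ := fun h => ha (Or.inl h)
    have hgA : g half ∈ (range α)ᶜ := fun h => hy0 (hαΓ h)
    have hall : (range α)ᶜ ⊆ V := by
      refine hpre.subset_left_of_subset_union hVo (isClosed_closure (s := V)).isOpen_compl
        (disjoint_compl_right.mono_left subset_closure) ?_ ⟨a, haA, mem_connectedComponentIn ha⟩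
      intro z hz
      by_cases hzc : z ∈ closure V
      · exact Or.inl (hcl ⟨hzc, hz⟩)
      · exact Or.inr hzc
    exact hVJ (hall hgA) (Or.inr ⟨half, rfl⟩)
  have hex : ∃ a ∉ range α ∪ range g, ∃ b ∉ range α ∪ range g,
      connectedComponentIn (range α ∪ range g)ᶜ a ≠
        connectedComponentIn (range α ∪ range g)ᶜ b := by
    by_contra! hcon
    apply jordan_sep hα hg h0 h1 h01 hab
    apply isPreconnected_of_forall_pair
    intro a ha b hb
    exact ⟨_, connectedComponentIn_subset _ _,
      mem_connectedComponentIn ha, hcon a ha b hb ▸ mem_connectedComponentIn hb,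
      isPreconnected_connectedComponentIn⟩
  obtain ⟨a, ha, b, hb, hne⟩ := hex
  obtain ⟨y₁, hy₁, e₁⟩ := claim3 a ha
  obtain ⟨y₂, hy₂, e₂⟩ := claim3 b hb
  refine ⟨_, _, ?_, ⟨y₁, hy₁, rfl⟩, ⟨y₂, hy₂, rfl⟩, ?_⟩
  · intro h
    exact hne (by rw [← e₁, ← e₂]; exact claim2 y₁ hy₁ y₂ hy₂ h)
  · intro y hy
    have hyJ : y ∉ range α ∪ range g := fun h => hUJ y hy (Or.inr h)
    by_contra! hcon
    have n1 := fun h => hcon.1 (claim1 y hy y₁ hy₁ h)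
    have n2 := fun h => hcon.2 (claim1 y hy y₂ hy₂ h)
    rw [e₁] at n1
    rw [e₂] at n2
    have up := fun {c d : ℂ} => @jordan_upper α g hα hg iα ig h0 h1 hab c d
    rcases bounded_or hJc hne with h | h
    · rcases bounded_or hJc n2 with h' | h'
      · exact n1 (up hyJ ha h' h)
      · exact hne (up ha hb h h')
    · rcases bounded_or hJc n1 with h' | h'
      · exact n2 (up hyJ hb h' h)
      · exact hne (up ha hb h' h)

/-- sub-arc of the circle -/
lemma circle_arc (p q : Metric.sphere (0 : EuclideanSpace ℝ (Fin 2)) 1) (hpq : p ≠ q) :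
    ∃ c : I → Metric.sphere (0 : EuclideanSpace ℝ (Fin 2)) 1,
      Continuous c ∧ Function.Injective c ∧ c 0 = p ∧ c 1 = q := by
  have hnorm : ∀ t : ℝ, (!₂[Real.cos t, Real.sin t] : EuclideanSpace ℝ (Fin 2)) ∈
      Metric.sphere (0 : EuclideanSpace ℝ (Fin 2)) 1 := by
    intro t
    simp [EuclideanSpace.norm_eq, Fin.sum_univ_two]
  let e : ℝ → Metric.sphere (0 : EuclideanSpace ℝ (Fin 2)) 1 :=
    fun t => ⟨!₂[Real.cos t, Real.sin t], hnorm t⟩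
  have he : Continuous e := by
    refine Continuous.subtype_mk ?_ _
    refine (PiLp.continuous_toLp 2 _).comp ?_
    refine continuous_pi (fun i => ?_)
    fin_cases i
    · exact Real.continuous_cos
    · exact Real.continuous_sin
  have hecs : ∀ s t, e s = e t → Real.cos s = Real.cos t ∧ Real.sin s = Real.sin t := by
    intro s t h
    have h := congrArg Subtype.val h
    exact ⟨congrArg (fun v => v 0) h, congrArg (fun v => v 1) h⟩
  have hsurj : ∀ x, ∃ t ∈ Ico (0:ℝ) (2 * Real.pi), e t = x := by
    rintro ⟨x, hx⟩
    have hx2 : x 0 ^ 2 + x 1 ^ 2 = 1 := by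
      have : ‖x‖ = 1 := by simpa using hx
      rw [EuclideanSpace.norm_eq, Fin.sum_univ_two] at this
      simpa using this
    let z : ℂ := ⟨x 0, x 1⟩
    have hz : ‖z‖ = 1 := by
      rw [Complex.norm_def, Complex.normSq_mk, ← sq, ← sq, hx2, Real.sqrt_one]
    have hz0 : z ≠ 0 := fun h => by simp [h] at hz
    have hc : Real.cos z.arg = x 0 := by rw [Complex.cos_arg hz0, hz, div_one]
    have hs : Real.sin z.arg = x 1 := by rw [Complex.sin_arg, hz, div_one]
    refine ⟨toIcoMod Real.two_pi_pos 0 z.arg, by simpa using toIcoMod_mem_Ico Real.two_pi_pos 0 z.arg, ?_⟩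
    apply Subtype.ext
    ext i
    have ht : toIcoMod Real.two_pi_pos 0 z.arg
      = z.arg - (toIcoDiv Real.two_pi_pos 0 z.arg : ℤ) * (2 * Real.pi) := by
      rw [toIcoMod, zsmul_eq_mul]
    fin_cases i
    · change Real.cos (toIcoMod Real.two_pi_pos 0 z.arg) = x 0
      rw [ht, Real.cos_sub_int_mul_two_pi, hc]
    · change Real.sin (toIcoMod Real.two_pi_pos 0 z.arg) = x 1
      rw [ht, Real.sin_sub_int_mul_two_pi, hs]
  have hinj : ∀ s ∈ Ico (0:ℝ) (2 * Real.pi), ∀ t ∈ Ico (0:ℝ) (2 * Real.pi), e s = e t → s = t := by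
    intro s hs t ht h
    obtain ⟨h1, h2⟩ := hecs s t h
    have h3 : Real.cos (s - t) = 1 := by
      rw [Real.cos_sub, h1, h2, ← sq, ← sq, Real.cos_sq_add_sin_sq]
    have := (Real.cos_eq_one_iff_of_lt_of_lt (by linarith [hs.1, ht.2]) (by linarith [hs.2, ht.1])).1 h3
    linarith
  obtain ⟨s, hs, rfl⟩ := hsurj p
  obtain ⟨t, ht, rfl⟩ := hsurj q
  have hst : s ≠ t := fun h => hpq (by rw [h])
  have hmem : ∀ u : I, s + u * (t - s) ∈ Ico (0:ℝ) (2 * Real.pi) := by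
    intro u
    have h0 := u.2.1
    have h1 := u.2.2
    have := (convex_Ico (0:ℝ) (2 * Real.pi)) hs ht (sub_nonneg.2 h1) h0 (by ring)
    simp only [smul_eq_mul] at this
    convert this using 1
    ring
  refine ⟨fun u => e (s + u * (t - s)), by fun_prop, ?_, by simp, by simp⟩
  intro u v huv
  have := hinj _ (hmem u) _ (hmem v) huv
  apply Subtype.ext
  exact mul_right_cancel₀ (sub_ne_zero.2 hst.symm) (add_left_cancel this)

/-- A chord `χ` of a Jordan curve `Γ` in `ℝ²` divides one of the two residual domains of
`Γ` into exactly two subdomains. -/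
theorem chord_divides_residual_domain
    (Γ χ : Set (Fin 2 → ℝ))
    (hΓ : ∃ f : Metric.sphere (0 : EuclideanSpace ℝ (Fin 2)) 1 → (Fin 2 → ℝ),
      Continuous f ∧ Function.Injective f ∧ Set.range f = Γ)
    (hχ : ∃ g : unitInterval → (Fin 2 → ℝ),
      Continuous g ∧ Function.Injective g ∧ Set.range g = χ ∧
      g 0 ∈ Γ ∧ g 1 ∈ Γ ∧ ∀ t : unitInterval, t ≠ 0 → t ≠ 1 → g t ∉ Γ) :
    ∃ y₀ ∉ Γ,
      χ \ Γ ⊆ connectedComponentIn Γᶜ y₀ ∧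
      ∃ V₁ V₂ : Set (Fin 2 → ℝ), V₁ ≠ V₂ ∧
        (∃ y₁ ∈ connectedComponentIn Γᶜ y₀ \ χ,
          V₁ = connectedComponentIn (connectedComponentIn Γᶜ y₀ \ χ) y₁) ∧
        (∃ y₂ ∈ connectedComponentIn Γᶜ y₀ \ χ,
          V₂ = connectedComponentIn (connectedComponentIn Γᶜ y₀ \ χ) y₂) ∧
        ∀ y ∈ connectedComponentIn Γᶜ y₀ \ χ,
          connectedComponentIn (connectedComponentIn Γᶜ y₀ \ χ) y = V₁ ∨
          connectedComponentIn (connectedComponentIn Γᶜ y₀ \ χ) y = V₂ := by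
  obtain ⟨f, hf, fi, rfl⟩ := hΓ
  obtain ⟨g, hg, gi, rfl, ⟨p, hp⟩, ⟨q, hq⟩, hgΓ⟩ := hχ
  have hpq : p ≠ q := fun h => zero_ne_one (gi (by rw [← hp, ← hq, h]))
  obtain ⟨c, hc, ci, c0, c1⟩ := circle_arc p q hpq
  let e : (Fin 2 → ℝ) ≃ₜ ℂ :=
    (Complex.basisOneI.equivFunL.symm : (Fin 2 → ℝ) ≃L[ℝ] ℂ).toHomeomorph
  have hce : ∀ (s : Set (Fin 2 → ℝ)), ∀ x ∈ s,
      connectedComponentIn (e '' s) (e x) = e '' connectedComponentIn s x :=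
    fun s x hx => (e.image_connectedComponentIn hx).symm
  obtain ⟨z₀, hz₀, hsub, V₁, V₂, hV, ⟨z₁, hz₁, rfl⟩, ⟨z₂, hz₂, rfl⟩, hall⟩ :=
    main_C (e '' range f) ((isCompact_range hf).image e.continuous)
    (fun t => e (f (c t))) (fun t => e (g t)) (by fun_prop)
    (e.injective.comp (fi.comp ci)) (by rintro _ ⟨t, rfl⟩; exact ⟨_, ⟨_, rfl⟩, rfl⟩)
    (by fun_prop) (e.injective.comp gi) (by simp [c0, hp]) (by simp [c1, hq])
    (by
      rintro t h0 h1 ⟨x, hx, hxe⟩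
      exact hgΓ t h0 h1 (e.injective hxe ▸ hx))
  have hr : range (fun t => e (g t)) = e '' range g := by rw [← range_comp]; rfl
  have hcompl : (e '' range f)ᶜ = e '' (range f)ᶜ := (image_compl_eq e.bijective).symm
  obtain ⟨y₀, rfl⟩ := e.surjective z₀
  have hy₀ : y₀ ∈ (range f)ᶜ := fun h => hz₀ ⟨_, h, rfl⟩
  have hd : ∀ s t : Set (Fin 2 → ℝ), e '' s \ e '' t = e '' (s \ t) :=
    fun s t => (image_sdiff e.injective s t).symm
  simp only [hr, hcompl, hce _ _ hy₀, hd] at hsub hz₁ hz₂ hV hall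
  obtain ⟨y₁, hy₁, rfl⟩ := hz₁
  obtain ⟨y₂, hy₂, rfl⟩ := hz₂
  rw [hce _ _ hy₁, hce _ _ hy₂] at hV
  refine ⟨y₀, hy₀, (image_subset_image_iff e.injective).1 hsub, _, _,
    fun h => hV (by rw [h]), ⟨y₁, hy₁, rfl⟩, ⟨y₂, hy₂, rfl⟩, ?_⟩
  intro y hy
  have := hall (e y) ⟨y, hy, rfl⟩
  rw [hce _ _ hy, hce _ _ hy₁, hce _ _ hy₂] at this
  exact this.imp (fun h => e.injective.image_injective h) (fun h => e.injective.image_injective h)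
end
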